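/- Let d > 0 and let f ∈ C¹(Ω)∩C(Ω̄), f not identically zero, be such that the problem −Δφ = f in Ω, φ ≥ 0 in Ω, φ = 0 on ∂Ω has a classical solution φ ∈ C(Ω̄)∩C²(Ω). Assume also that Ω admits a torsion function ξ. Then the problem −(1 + d·sin²(‖∇u‖_2)) Δu = sin²(u) + f(x) in Ω, u > 0 in Ω, u = 0 on ∂Ω has at least one classical solution. -/

import Mathlib

open MeasureTheory Set Real
open scoped ENNReal NNReal

noncomputable section

/-- The Laplacian of `u : ℝ^N → ℝ`, as the sum of second partial derivatives. -/
def lapl {N : ℕ} (u : EuclideanSpace ℝ (Fin N) → ℝ) (x : EuclideanSpace ℝ (Fin N)) : ℝ :=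
  ∑ i : Fin N, fderiv ℝ (fun y => fderiv ℝ u y (EuclideanSpace.single i 1)) x
    (EuclideanSpace.single i 1)

/-- The `L^p` norm of `u` on `Ω`. -/
def LpNorm {N : ℕ} (Ω : Set (EuclideanSpace ℝ (Fin N))) (p : ℝ≥0∞)
    (u : EuclideanSpace ℝ (Fin N) → ℝ) : ℝ :=
  (eLpNorm u p (volume.restrict Ω)).toReal

/-- The `L²` norm of the gradient of `u` on `Ω`. -/
def gradNorm2 {N : ℕ} (Ω : Set (EuclideanSpace ℝ (Fin N)))
    (u : EuclideanSpace ℝ (Fin N) → ℝ) : ℝ :=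
  (eLpNorm (fun x => gradient u x) 2 (volume.restrict Ω)).toReal

/-- A torsion function of `Ω`: `ξ ∈ C(Ω̄) ∩ C²(Ω)`, `ξ ≥ 0` in `Ω`, `-Δξ = 1` in `Ω`,
`ξ = 0` on `∂Ω`. -/
def IsTorsionFn {N : ℕ} (Ω : Set (EuclideanSpace ℝ (Fin N)))
    (ξ : EuclideanSpace ℝ (Fin N) → ℝ) : Prop :=
  ContinuousOn ξ (closure Ω) ∧ ContDiffOn ℝ 2 ξ Ω ∧ (∀ x ∈ Ω, 0 ≤ ξ x) ∧
    (∀ x ∈ Ω, -lapl ξ x = 1) ∧ (∀ x ∈ frontier Ω, ξ x = 0)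

/-!
Write the coefficient as `M(‖∇u‖₂)` and the nonlinearity as `g(u)`. Nothing is monotone, but the
problem is variational: with `A(t) = ∫₀ᵗ s M(s) ds` and `G' = g`, it is the Euler–Lagrange equation
of `A(‖∇u‖₂) - ∫ (G(u) + f u)` on `H¹₀(Ω)`, and a minimiser `u` exists because `A` is nondecreasing,
`M` is bounded below and `g` is bounded. With `m = M(‖∇u‖₂)` frozen, the remainder `v = m u - φ`
solves `-Δv = g(u)`, where `0 ≤ g(u) ≤ C`.

No regularity of `∂Ω` is available, so the boundary values come from comparison: the weak maximum
principle gives `0 ≤ v ≤ C ξ`, and the torsion function vanishes continuously on `∂Ω`. In the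
interior `v` is the sum of a mollification of itself and a compactly supported potential of `g(u)`;
this yields `v ∈ C¹`, hence `g(u) ∈ C¹`, hence `v ∈ C²`. The same formula shows that `v` is positive
or identically zero. If `v = 0` then `g(φ / m) = 0`, and since `g > 0` on some `(0, ε)` the
intermediate value theorem forces `φ = 0`, contradicting `f ≠ 0`.
-/

section WeakMinimization

open Filter Topology

variable {V X Y : Type*} [NormedAddCommGroup V] [InnerProductSpace ℝ V] [CompleteSpace V]
  [NormedAddCommGroup X] [InnerProductSpace ℝ X] [CompleteSpace X]
  [NormedAddCommGroup Y] [InnerProductSpace ℝ Y] [CompleteSpace Y]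

/-- The Riesz representative of a functional. As a map out of `WeakDual ℝ V` it transports the
weak topology to `V`, so that Banach–Alaoglu applies to balls of the Hilbert space `V`. -/
def rieszRep (ℓ : WeakDual ℝ V) : V :=
  (InnerProductSpace.toDual ℝ V).symm (WeakDual.toStrongDual ℓ)

theorem norm_rieszRep (ℓ : WeakDual ℝ V) : ‖rieszRep ℓ‖ = ‖WeakDual.toStrongDual ℓ‖ :=
  LinearIsometryEquiv.norm_map _ _

theorem rieszRep_surjective : Function.Surjective (rieszRep : WeakDual ℝ V → V) := fun v ↦
  ⟨StrongDual.toWeakDual (InnerProductSpace.toDual ℝ V v), by simp [rieszRep]⟩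

theorem continuous_inner_map_rieszRep (T : V →L[ℝ] Y) (y : Y) :
    Continuous fun ℓ : WeakDual ℝ V ↦ inner ℝ (T (rieszRep ℓ)) y := by
  have h (ℓ : WeakDual ℝ V) : inner ℝ (T (rieszRep ℓ)) y = ℓ (ContinuousLinearMap.adjoint T y) := by
    rw [← ContinuousLinearMap.adjoint_inner_right, rieszRep, InnerProductSpace.toDual_symm_apply]
    rfl
  simp only [h]
  exact WeakBilin.eval_continuous (topDualPairing ℝ V) _

theorem lowerSemicontinuous_norm_map_rieszRep (T : V →L[ℝ] Y) :
    LowerSemicontinuous fun ℓ : WeakDual ℝ V ↦ ‖T (rieszRep ℓ)‖ := by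
  intro ℓ c hc
  rcases lt_or_ge c 0 with hc0 | hc0
  · exact Eventually.of_forall fun k ↦ hc0.trans_le (norm_nonneg _)
  have hpos : 0 < ‖T (rieszRep ℓ)‖ := hc0.trans_lt hc
  have hlt : c * ‖T (rieszRep ℓ)‖ < inner ℝ (T (rieszRep ℓ)) (T (rieszRep ℓ)) := by
    rw [real_inner_self_eq_norm_mul_norm]
    gcongr
  have hcont := continuous_inner_map_rieszRep T (T (rieszRep ℓ))
  filter_upwards [hcont.continuousAt.eventually_const_lt hlt] with k hk
  exact lt_of_mul_lt_mul_right (hk.trans_le (real_inner_le_norm _ _)) hpos.le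

theorem continuousOn_map_rieszRep_closedBall {S : V →L[ℝ] X} (hS : IsCompactOperator S) (R : ℝ) :
    ContinuousOn (fun ℓ : WeakDual ℝ V ↦ S (rieszRep ℓ))
      (WeakDual.toStrongDual ⁻¹' Metric.closedBall 0 R) := by
  intro ℓ _
  obtain ⟨K, hK, hKS⟩ :=
    IsCompactOperator.image_closedBall_subset_compact (f := (S : V →ₗ[ℝ] X)) hS R
  refine hK.tendsto_nhds_of_unique_mapClusterPt ?_ fun x _ hx ↦ ext_inner_right ℝ fun y ↦ ?_
  · filter_upwards [self_mem_nhdsWithin] with k hk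
    exact hKS ⟨rieszRep k, by simpa [norm_rieszRep] using hk, rfl⟩
  · have hinner : MapClusterPt (inner ℝ x y)
        (𝓝[WeakDual.toStrongDual ⁻¹' Metric.closedBall 0 R] ℓ) fun k ↦ inner ℝ (S (rieszRep k)) y :=
      hx.continuousAt_comp (by fun_prop : ContinuousAt (fun z : X ↦ (inner ℝ z y : ℝ)) x)
    exact eq_of_nhds_neBot <|
      ClusterPt.mono hinner (continuous_inner_map_rieszRep S y).continuousWithinAt.tendsto

theorem exists_forall_le_of_isCompactOperator {S : V →L[ℝ] X} (hS : IsCompactOperator S)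
    (T : V →L[ℝ] Y) {A : ℝ → ℝ} (hAmono : MonotoneOn A (Ici 0)) (hA : Continuous A)
    {B : X → ℝ} (hB : Continuous B) {R : ℝ}
    (hcoercive : ∀ u : V, R < ‖u‖ → A ‖T 0‖ - B (S 0) ≤ A ‖T u‖ - B (S u)) :
    ∃ u : V, ∀ w : V, A ‖T u‖ - B (S u) ≤ A ‖T w‖ - B (S w) := by
  set ball : Set (WeakDual ℝ V) := WeakDual.toStrongDual ⁻¹' Metric.closedBall 0 (max R 0)
  have mem_ball (ℓ : WeakDual ℝ V) : ℓ ∈ ball ↔ ‖rieszRep ℓ‖ ≤ max R 0 := by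
    simp [ball, norm_rieszRep]
  have hAlsc : LowerSemicontinuous fun ℓ : WeakDual ℝ V ↦ A ‖T (rieszRep ℓ)‖ := by
    have hmono : Monotone fun t ↦ A (max t 0) := fun s t hst ↦
      hAmono (mem_Ici.2 (le_max_right s 0)) (mem_Ici.2 (le_max_right t 0)) (max_le_max_right 0 hst)
    simpa [Function.comp_def] using (hA.comp (continuous_id.max continuous_const)
      ).comp_lowerSemicontinuous (lowerSemicontinuous_norm_map_rieszRep T) hmono
  have hBcont : ContinuousOn (fun ℓ : WeakDual ℝ V ↦ -B (S (rieszRep ℓ))) ball :=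
    (hB.comp_continuousOn (continuousOn_map_rieszRep_closedBall hS _)).neg
  have hlsc : LowerSemicontinuousOn
      (fun ℓ : WeakDual ℝ V ↦ A ‖T (rieszRep ℓ)‖ - B (S (rieszRep ℓ))) ball := by
    simpa only [sub_eq_add_neg] using
      (hAlsc.lowerSemicontinuousOn ball).add hBcont.lowerSemicontinuousOn
  have hcompact : IsCompact ball := WeakDual.isCompact_closedBall (𝕜 := ℝ) 0 _
  obtain ⟨ℓ, -, hℓ⟩ := hlsc.exists_isMinOn ⟨0, by simp [ball]⟩ hcompact
  have hmin (w : V) (hw : ‖w‖ ≤ max R 0) :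
      A ‖T (rieszRep ℓ)‖ - B (S (rieszRep ℓ)) ≤ A ‖T w‖ - B (S w) := by
    obtain ⟨k, rfl⟩ := rieszRep_surjective w
    exact hℓ ((mem_ball k).2 hw)
  refine ⟨rieszRep ℓ, fun w ↦ ?_⟩
  rcases le_or_gt ‖w‖ (max R 0) with hw | hw
  · exact hmin w hw
  · exact (hmin 0 (by simp)).trans (hcoercive w ((le_max_left _ _).trans_lt hw))

end WeakMinimization

section SobolevSpace

open Filter Topology

variable {E : Type*} [NormedAddCommGroup E] [InnerProductSpace ℝ E]

/-- Test functions on `Ω`: of class `C¹` on the whole space, with compact support inside `Ω`. -/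
structure IsC1Test (Ω : Set E) (ψ : E → ℝ) : Prop where
  contDiff : ContDiff ℝ 1 ψ
  hasCompactSupport : HasCompactSupport ψ
  tsupport_subset : tsupport ψ ⊆ Ω

namespace IsC1Test

variable {Ω : Set E} {ψ χ : E → ℝ}

theorem differentiable (h : IsC1Test Ω ψ) : Differentiable ℝ ψ :=
  h.contDiff.differentiable one_ne_zero

theorem apply_eq_zero (h : IsC1Test Ω ψ) {x : E} (hx : x ∉ Ω) : ψ x = 0 :=
  image_eq_zero_of_notMem_tsupport fun hxψ ↦ hx (h.tsupport_subset hxψ)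

theorem zero (Ω : Set E) : IsC1Test Ω (0 : E → ℝ) :=
  ⟨contDiff_const, HasCompactSupport.zero, by simp [tsupport]⟩

theorem add (hψ : IsC1Test Ω ψ) (hχ : IsC1Test Ω χ) : IsC1Test Ω (ψ + χ) :=
  ⟨hψ.contDiff.add hχ.contDiff, hψ.hasCompactSupport.add hχ.hasCompactSupport,
    (tsupport_add ψ χ).trans (union_subset hψ.tsupport_subset hχ.tsupport_subset)⟩

theorem smul (h : IsC1Test Ω ψ) (c : ℝ) : IsC1Test Ω (c • ψ) :=
  ⟨contDiff_const.smul h.contDiff, h.hasCompactSupport.smul_left (f := fun _ ↦ c),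
    (tsupport_smul_subset_right (fun _ ↦ c) ψ).trans h.tsupport_subset⟩

end IsC1Test

section Gradient

variable [CompleteSpace E] {ψ χ : E → ℝ}

theorem norm_gradient (ψ : E → ℝ) (x : E) : ‖gradient ψ x‖ = ‖fderiv ℝ ψ x‖ := by
  simp [gradient]

theorem gradient_add (hψ : Differentiable ℝ ψ) (hχ : Differentiable ℝ χ) :
    gradient (ψ + χ) = gradient ψ + gradient χ := by
  ext1 x
  simp only [gradient, Pi.add_apply, fderiv_add (hψ x) (hχ x), map_add]

theorem gradient_smul (hψ : Differentiable ℝ ψ) (c : ℝ) :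
    gradient (c • ψ) = c • gradient ψ := by
  ext1 x
  simp only [gradient, Pi.smul_apply, fderiv_const_smul (hψ x), map_smul]

theorem continuous_gradient (hψ : ContDiff ℝ 1 ψ) : Continuous (gradient ψ) :=
  (InnerProductSpace.toDual ℝ E).symm.continuous.comp (hψ.continuous_fderiv one_ne_zero)

theorem IsC1Test.gradient_apply_eq_zero {Ω : Set E} (h : IsC1Test Ω ψ) {x : E} (hx : x ∉ Ω) :
    gradient ψ x = 0 := by
  have hx' : x ∉ tsupport (fderiv ℝ ψ) := fun hxψ ↦
    hx (h.tsupport_subset (tsupport_fderiv_subset ℝ hxψ))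
  simp [gradient, image_eq_zero_of_notMem_tsupport hx']

theorem IsC1Test.hasCompactSupport_gradient {Ω : Set E} (h : IsC1Test Ω ψ) :
    HasCompactSupport (gradient ψ) :=
  (h.hasCompactSupport.fderiv ℝ).comp_left (g := (InnerProductSpace.toDual ℝ E).symm) (map_zero _)

end Gradient

section LebesgueTwo

variable {α F : Type*} [MeasurableSpace α] [NormedAddCommGroup F] {μ : Measure α}

theorem lintegral_sq_le_measure_univ_mul {f : α → ℝ≥0∞} (hf : AEMeasurable f μ) :
    (∫⁻ a, f a ∂μ) ^ 2 ≤ μ univ * ∫⁻ a, f a ^ 2 ∂μ := by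
  have holder := ENNReal.lintegral_mul_le_Lp_mul_Lq μ (p := 2) (q := 2)
    (by constructor <;> norm_num) (aemeasurable_const (b := (1 : ℝ≥0∞))) hf
  simp only [Pi.mul_apply, one_mul, ENNReal.one_rpow, lintegral_one] at holder
  have hsqrt (a : ℝ≥0∞) : (a ^ (1 / (2 : ℝ))) ^ 2 = a := by
    rw [← ENNReal.rpow_natCast, ← ENNReal.rpow_mul]
    norm_num
  calc (∫⁻ a, f a ∂μ) ^ 2
      ≤ (μ univ ^ (1 / (2 : ℝ)) * (∫⁻ a, f a ^ (2 : ℝ) ∂μ) ^ (1 / (2 : ℝ))) ^ 2 := by gcongr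
    _ = μ univ * ∫⁻ a, f a ^ 2 ∂μ := by simp only [mul_pow, hsqrt, ENNReal.rpow_two]

theorem enorm_toLp_two_sq {f : α → F} (hf : MemLp f 2 μ) :
    ‖hf.toLp f‖ₑ ^ 2 = ∫⁻ a, ‖f a‖ₑ ^ 2 ∂μ := by
  simpa [Lp.enorm_toLp] using eLpNorm_nnreal_pow_eq_lintegral (f := f) (μ := μ) (p := 2) (by simp)

theorem norm_le_mul_norm_of_enorm_sq_le {F' : Type*} [NormedAddCommGroup F'] {a : F} {b : F'}
    {C : ℝ} (hC : 0 ≤ C) (h : ‖a‖ₑ ^ 2 ≤ ENNReal.ofReal (C ^ 2) * ‖b‖ₑ ^ 2) : ‖a‖ ≤ C * ‖b‖ := by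
  rw [← ofReal_norm, ← ofReal_norm, ← ENNReal.ofReal_pow (norm_nonneg a),
    ← ENNReal.ofReal_pow (norm_nonneg b), ← ENNReal.ofReal_mul (sq_nonneg C),
    ENNReal.ofReal_le_ofReal_iff (by positivity), ← mul_pow] at h
  exact le_of_sq_le_sq h (by positivity)

theorem isClosed_setOf_ae_eq_zero_of_mem [NormedSpace ℝ F] {p : ℝ≥0∞} [Fact (1 ≤ p)]
    {s : Set α} (hs : MeasurableSet s) : IsClosed {f : Lp F p μ | ∀ᵐ a ∂μ, a ∈ s → f a = 0} := by
  have hset : {f : Lp F p μ | ∀ᵐ a ∂μ, a ∈ s → f a = 0} =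
      {f | LpToLpRestrictCLM α F ℝ μ p s f = 0} := by
    ext f
    have hcoe := LpToLpRestrictCLM_coeFn ℝ s f
    rw [mem_ofPred_eq, mem_ofPred_eq, Lp.eq_zero_iff_ae_eq_zero, ← ae_restrict_iff' hs]
    exact ⟨fun h ↦ hcoe.trans h, fun h ↦ hcoe.symm.trans h⟩
  rw [hset]
  exact isClosed_eq (LpToLpRestrictCLM α F ℝ μ p s).continuous continuous_const

end LebesgueTwo

variable [FiniteDimensional ℝ E]

theorem enorm_sub_sq_le_lintegral_gradient {ψ : E → ℝ} (hψ : ContDiff ℝ 1 ψ) (x z : E) :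
    ‖ψ (x + z) - ψ x‖ₑ ^ 2 ≤
      ∫⁻ t in Ioc (0 : ℝ) 1, ‖z‖ₑ ^ 2 * ‖gradient ψ (x + t • z)‖ₑ ^ 2 := by
  set slope : ℝ → ℝ := fun t ↦ fderiv ℝ ψ (x + t • z) z
  have hderiv (t : ℝ) : HasDerivAt (fun t : ℝ ↦ ψ (x + t • z)) (slope t) t := by
    have hline : HasDerivAt (fun t : ℝ ↦ x + t • z) z t := by
      simpa using ((hasDerivAt_id t).smul_const z).const_add x
    exact (hψ.differentiable one_ne_zero _).hasFDerivAt.comp_hasDerivAt t hline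
  have hcont : Continuous slope :=
    ((hψ.continuous_fderiv one_ne_zero).comp (by fun_prop)).clm_apply continuous_const
  have hftc : ψ (x + z) - ψ x = ∫ t in Ioc (0 : ℝ) 1, slope t := by
    simpa [intervalIntegral.integral_of_le] using (intervalIntegral.integral_eq_sub_of_hasDerivAt
      (a := 0) (b := 1) (fun t _ ↦ hderiv t) (hcont.intervalIntegrable _ _)).symm
  calc ‖ψ (x + z) - ψ x‖ₑ ^ 2
      ≤ (∫⁻ t in Ioc (0 : ℝ) 1, ‖slope t‖ₑ) ^ 2 := by
        rw [hftc]
        gcongr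
        exact enorm_integral_le_lintegral_enorm _
    _ ≤ ∫⁻ t in Ioc (0 : ℝ) 1, ‖slope t‖ₑ ^ 2 := by
        simpa using lintegral_sq_le_measure_univ_mul (μ := volume.restrict (Ioc (0 : ℝ) 1))
          hcont.enorm.measurable.aemeasurable
    _ ≤ ∫⁻ t in Ioc (0 : ℝ) 1, ‖z‖ₑ ^ 2 * ‖gradient ψ (x + t • z)‖ₑ ^ 2 := by
        gcongr with t
        rw [← mul_pow, mul_comm, enorm_eq_iff_norm_eq.2 (norm_gradient ψ (x + t • z))]
        gcongr
        exact ContinuousLinearMap.le_opENorm _ _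

variable [MeasurableSpace E] [BorelSpace E]

theorem lintegral_enorm_translate_sub_sq_le {ψ : E → ℝ} (hψ : ContDiff ℝ 1 ψ) (z : E) :
    ∫⁻ x, ‖ψ (x + z) - ψ x‖ₑ ^ 2 ≤ ‖z‖ₑ ^ 2 * ∫⁻ x, ‖gradient ψ x‖ₑ ^ 2 := by
  have hgrad := continuous_gradient hψ
  calc ∫⁻ x, ‖ψ (x + z) - ψ x‖ₑ ^ 2
      ≤ ∫⁻ x, ∫⁻ t in Ioc (0 : ℝ) 1, ‖z‖ₑ ^ 2 * ‖gradient ψ (x + t • z)‖ₑ ^ 2 :=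
        lintegral_mono fun x ↦ enorm_sub_sq_le_lintegral_gradient hψ x z
    _ = ∫⁻ t in Ioc (0 : ℝ) 1, ∫⁻ x, ‖z‖ₑ ^ 2 * ‖gradient ψ (x + t • z)‖ₑ ^ 2 := by
        have hcont : Continuous fun p : E × ℝ ↦ gradient ψ (p.1 + p.2 • z) := by fun_prop
        exact lintegral_lintegral_swap
          ((hcont.enorm.measurable.pow_const 2).const_mul _).aemeasurable
    _ = ∫⁻ _ in Ioc (0 : ℝ) 1, ‖z‖ₑ ^ 2 * ∫⁻ x, ‖gradient ψ x‖ₑ ^ 2 := by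
        congr 1 with t
        rw [lintegral_const_mul' _ _ (by simp),
          lintegral_add_right_eq_self (fun x ↦ ‖gradient ψ x‖ₑ ^ 2) (t • z)]
    _ = ‖z‖ₑ ^ 2 * ∫⁻ x, ‖gradient ψ x‖ₑ ^ 2 := by simp

theorem IsC1Test.memLp {Ω : Set E} {ψ : E → ℝ} (h : IsC1Test Ω ψ) :
    MemLp ψ 2 (volume : Measure E) :=
  h.contDiff.continuous.memLp_of_hasCompactSupport h.hasCompactSupport

theorem IsC1Test.memLp_gradient {Ω : Set E} {ψ : E → ℝ} (h : IsC1Test Ω ψ) :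
    MemLp (gradient ψ) 2 (volume : Measure E) :=
  (continuous_gradient h.contDiff).memLp_of_hasCompactSupport h.hasCompactSupport_gradient

variable (E) in
/-- Pairs of a square integrable function and a square integrable vector field, the ambient
Hilbert space in which a Sobolev function is recorded together with its weak gradient. -/
abbrev L2Pair := WithLp 2 (Lp ℝ 2 (volume : Measure E) × Lp E 2 (volume : Measure E))

/-- The function component of an element of `L2Pair E`. -/
def L2Pair.val : L2Pair E →L[ℝ] Lp ℝ 2 (volume : Measure E) := WithLp.fstL 2 ℝ _ _

/-- The gradient component of an element of `L2Pair E`. -/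
def L2Pair.grad : L2Pair E →L[ℝ] Lp E 2 (volume : Measure E) := WithLp.sndL 2 ℝ _ _

open L2Pair

theorem L2Pair.norm_sq (u : L2Pair E) : ‖u‖ ^ 2 = ‖val u‖ ^ 2 + ‖grad u‖ ^ 2 :=
  WithLp.prod_norm_sq_eq_of_L2 u

theorem L2Pair.norm_grad_le (u : L2Pair E) : ‖grad u‖ ≤ ‖u‖ :=
  le_of_sq_le_sq (by simp [L2Pair.norm_sq]) (norm_nonneg u)

/-- A test function together with its gradient, as an element of `L2Pair E`. -/
def IsC1Test.toL2Pair {Ω : Set E} {ψ : E → ℝ} (h : IsC1Test Ω ψ) : L2Pair E :=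
  WithLp.toLp 2 (h.memLp.toLp ψ, h.memLp_gradient.toLp (gradient ψ))

section

variable {Ω : Set E} {ψ : E → ℝ}

theorem IsC1Test.val_toL2Pair (h : IsC1Test Ω ψ) : val h.toL2Pair = h.memLp.toLp ψ := rfl

theorem IsC1Test.grad_toL2Pair (h : IsC1Test Ω ψ) :
    grad h.toL2Pair = h.memLp_gradient.toLp (gradient ψ) := rfl

theorem IsC1Test.coeFn_val (h : IsC1Test Ω ψ) : val h.toL2Pair =ᵐ[volume] ψ :=
  MemLp.coeFn_toLp h.memLp

theorem IsC1Test.coeFn_grad (h : IsC1Test Ω ψ) : grad h.toL2Pair =ᵐ[volume] gradient ψ :=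
  MemLp.coeFn_toLp h.memLp_gradient

end

/-- The subspace of `L2Pair E` formed by the test functions on `Ω`. -/
def testSubspace (Ω : Set E) : Submodule ℝ (L2Pair E) where
  carrier := {u | ∃ (ψ : E → ℝ) (h : IsC1Test Ω ψ), u = h.toL2Pair}
  add_mem' := by
    rintro _ _ ⟨ψ, hψ, rfl⟩ ⟨χ, hχ, rfl⟩
    refine ⟨ψ + χ, hψ.add hχ, ?_⟩
    simp only [IsC1Test.toL2Pair, gradient_add hψ.differentiable hχ.differentiable]
    rfl
  zero_mem' := by
    refine ⟨0, IsC1Test.zero Ω, ?_⟩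
    have hgrad : gradient (0 : E → ℝ) = 0 := by ext1 x; simp [gradient]
    simp only [IsC1Test.toL2Pair, hgrad]
    rfl
  smul_mem' := by
    rintro c _ ⟨ψ, h, rfl⟩
    refine ⟨c • ψ, h.smul c, ?_⟩
    simp only [IsC1Test.toL2Pair, gradient_smul h.differentiable c]
    rfl

/-- The Sobolev space `H¹₀(Ω)`: the closure of the test functions. -/
def H10 (Ω : Set E) : Submodule ℝ (L2Pair E) := (testSubspace Ω).topologicalClosure

variable {Ω : Set E}

instance : CompleteSpace (H10 Ω) :=
  (Submodule.isClosed_topologicalClosure _).completeSpace_coe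

theorem IsC1Test.toL2Pair_mem_H10 {ψ : E → ℝ} (h : IsC1Test Ω ψ) : h.toL2Pair ∈ H10 Ω :=
  Submodule.le_topologicalClosure _ ⟨ψ, h, rfl⟩

theorem H10.induction {P : L2Pair E → Prop} (hclosed : IsClosed {u | P u})
    (htest : ∀ (ψ : E → ℝ) (h : IsC1Test Ω ψ), P h.toL2Pair) : ∀ u ∈ H10 Ω, P u := by
  have hsub : closure (testSubspace Ω : Set (L2Pair E)) ⊆ {u | P u} :=
    hclosed.closure_subset_iff.mpr (by rintro _ ⟨ψ, h, rfl⟩; exact htest ψ h)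
  exact fun u hu ↦ hsub hu

theorem H10.val_ae_eq_zero (hΩ : MeasurableSet Ω) :
    ∀ u ∈ H10 Ω, ∀ᵐ x, x ∉ Ω → val u x = 0 := by
  refine H10.induction
    ((isClosed_setOf_ae_eq_zero_of_mem hΩ.compl).preimage val.continuous) fun ψ h ↦ ?_
  filter_upwards [h.coeFn_val] with x hx hxΩ
  rw [hx, h.apply_eq_zero hxΩ]

theorem H10.grad_ae_eq_zero (hΩ : MeasurableSet Ω) :
    ∀ u ∈ H10 Ω, ∀ᵐ x, x ∉ Ω → grad u x = 0 := by
  refine H10.induction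
    ((isClosed_setOf_ae_eq_zero_of_mem hΩ.compl).preimage grad.continuous) fun ψ h ↦ ?_
  filter_upwards [h.coeFn_grad] with x hx hxΩ
  rw [hx, h.gradient_apply_eq_zero hxΩ]

-- Translating by a vector longer than the diameter moves `Ω` off itself, so the translation
-- estimate bounds the function itself.
theorem H10.poincare [Nontrivial E] (hΩ : Bornology.IsBounded Ω) :
    ∃ C : ℝ, 0 < C ∧ ∀ u ∈ H10 Ω, ‖val u‖ ≤ C * ‖grad u‖ := by
  obtain ⟨D, hD⟩ := Metric.isBounded_iff.1 hΩ
  obtain ⟨z, hz⟩ := NormedSpace.exists_lt_norm ℝ E (max D 0)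
  obtain ⟨hDz, hz0⟩ := max_lt_iff.1 hz
  have hshift : ∀ x ∈ Ω, x + z ∉ Ω := fun x hx hxz ↦ by
    have := hD hxz hx
    rw [dist_eq_norm, add_sub_cancel_left] at this
    linarith
  refine ⟨‖z‖, hz0, H10.induction (isClosed_le (by fun_prop) (by fun_prop)) fun ψ h ↦ ?_⟩
  rw [h.val_toL2Pair, h.grad_toL2Pair]
  refine norm_le_mul_norm_of_enorm_sq_le hz0.le ?_
  rw [enorm_toLp_two_sq, enorm_toLp_two_sq, ENNReal.ofReal_pow hz0.le, ofReal_norm]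
  refine (lintegral_mono fun x ↦ ?_).trans (lintegral_enorm_translate_sub_sq_le h.contDiff z)
  by_cases hx : x ∈ Ω
  · simp [h.apply_eq_zero (hshift x hx)]
  · simp [h.apply_eq_zero hx]

end SobolevSpace

section Rellich

open Filter Topology L2Pair

theorem enorm_sub_average_sq_le {α F : Type*} [MeasurableSpace α] {μ : Measure α}
    [IsFiniteMeasure μ] [NeZero μ] [NormedAddCommGroup F] [NormedSpace ℝ F] [CompleteSpace F]
    {f : α → F} (hf : Integrable f μ) (c : F) :
    ‖c - ⨍ a, f a ∂μ‖ₑ ^ 2 ≤ (μ univ)⁻¹ * ∫⁻ a, ‖c - f a‖ₑ ^ 2 ∂μ := by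
  have hfν : Integrable f ((μ univ)⁻¹ • μ) := hf.smul_measure (by simp [NeZero.ne])
  have hsub : c - ⨍ a, f a ∂μ = ∫ a, (c - f a) ∂((μ univ)⁻¹ • μ) := by
    rw [integral_sub (integrable_const c) hfν, average]
    simp
  calc ‖c - ⨍ a, f a ∂μ‖ₑ ^ 2
      ≤ (∫⁻ a, ‖c - f a‖ₑ ∂((μ univ)⁻¹ • μ)) ^ 2 := by
        rw [hsub]
        gcongr
        exact enorm_integral_le_lintegral_enorm _
    _ ≤ ((μ univ)⁻¹ • μ) univ * ∫⁻ a, ‖c - f a‖ₑ ^ 2 ∂((μ univ)⁻¹ • μ) :=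
        lintegral_sq_le_measure_univ_mul ((integrable_const c).sub hfν).1.enorm
    _ = (μ univ)⁻¹ * ∫⁻ a, ‖c - f a‖ₑ ^ 2 ∂μ := by
        rw [measure_univ, one_mul, lintegral_smul_measure, smul_eq_mul]

theorem isCompactOperator_smulRight {X Y : Type*} [NormedAddCommGroup X] [NormedSpace ℝ X]
    [NormedAddCommGroup Y] [NormedSpace ℝ Y] (l : X →L[ℝ] ℝ) (y : Y) :
    IsCompactOperator (l.smulRight y) :=
  (isCompactOperator_of_locallyCompactSpace_rng
    (ContinuousLinearMap.toSpanSingleton ℝ y)).comp_clm l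

theorem exists_isCompactOperator_ae_eq_indicator {α β V : Type*} [MeasurableSpace α]
    {μ : Measure α} [NormedAddCommGroup V] [NormedSpace ℝ V] {Ω : Set α} (hΩ : MeasurableSet Ω)
    (hμΩ : μ Ω ≠ ∞) (s : SimpleFunc α β) (l : β → V →L[ℝ] ℝ) :
    ∃ P : V →L[ℝ] Lp ℝ 2 μ, IsCompactOperator P ∧
      ∀ v, P v =ᵐ[μ] Ω.indicator fun a ↦ l (s a) v := by
  classical
  have hmeas (b : β) : MeasurableSet (Ω ∩ s ⁻¹' {b}) := hΩ.inter (s.measurableSet_preimage _)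
  have hfin (b : β) : μ (Ω ∩ s ⁻¹' {b}) ≠ ∞ := measure_ne_top_of_subset inter_subset_left hμΩ
  let χ (b : β) : Lp ℝ 2 μ := indicatorConstLp 2 (hmeas b) (hfin b) (1 : ℝ)
  have hχ (v : V) (b : β) :
      (l b v • χ b : Lp ℝ 2 μ) =ᵐ[μ] (Ω ∩ s ⁻¹' {b}).indicator fun _ ↦ l b v := by
    filter_upwards [Lp.coeFn_smul (l b v) (χ b), indicatorConstLp_coeFn (p := 2)
      (hs := hmeas b) (hμs := hfin b) (c := (1 : ℝ))] with a hsmul hind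
    rw [hsmul, Pi.smul_apply, hind]
    simp [indicator]
  refine ⟨∑ b ∈ s.range, (l b).smulRight (χ b),
    (compactOperator (RingHom.id ℝ) V (Lp ℝ 2 μ)).sum_mem fun b _ ↦
      isCompactOperator_smulRight (l b) (χ b), fun v ↦ ?_⟩
  have hsum : (∑ b ∈ s.range, (l b).smulRight (χ b)) v = ∑ b ∈ s.range, l b v • χ b := by simp
  rw [hsum]
  filter_upwards [Lp.coeFn_finsetSum s.range fun b ↦ l b v • χ b,
    (Finset.eventually_all s.range).2 fun b _ ↦ hχ v b] with a hcoe hterm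
  rw [hcoe, Finset.sum_apply, Finset.sum_congr rfl hterm]
  by_cases ha : a ∈ Ω
  · simp [indicator, ha, eq_comm (a := s a)]
  · simp [ha]

theorem exists_simpleFunc_dist_lt {X : Type*} [PseudoMetricSpace X] [MeasurableSpace X]
    [OpensMeasurableSpace X] [Nonempty X] {Ω : Set X} (hΩ : TotallyBounded Ω) {ε : ℝ}
    (hε : 0 < ε) : ∃ s : SimpleFunc X X, ∀ x ∈ Ω, dist (s x) x < ε := by
  obtain ⟨t, -, htfin, ht⟩ := Metric.finite_approx_of_totallyBounded hΩ ε hε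
  obtain rfl | htne := t.eq_empty_or_nonempty
  · exact ⟨SimpleFunc.const X (Classical.arbitrary X), fun x hx ↦ by simpa using ht hx⟩
  obtain ⟨e, rfl⟩ := htfin.countable.exists_eq_range htne
  obtain ⟨n, hn⟩ := (htfin.image (Function.invFun e)).bddAbove
  refine ⟨SimpleFunc.nearestPt e n, fun x hx ↦ ?_⟩
  obtain ⟨y, hy, hxy⟩ := mem_iUnion₂.1 (ht hx)
  have hnearest := SimpleFunc.edist_nearestPt_le e x (hn (mem_image_of_mem _ hy))
  rw [Function.invFun_eq hy, edist_dist, edist_dist, ENNReal.ofReal_le_ofReal_iff dist_nonneg,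
    dist_comm y] at hnearest
  exact hnearest.trans_lt hxy

variable {E : Type*} [NormedAddCommGroup E] [InnerProductSpace ℝ E] [FiniteDimensional ℝ E]
  [MeasurableSpace E] [BorelSpace E] {Ω : Set E}

/-- The average over the ball `Metric.ball p ε`, as a functional on square integrable functions. -/
def ballAverage (p : E) (ε : ℝ) : Lp ℝ 2 (volume : Measure E) →L[ℝ] ℝ :=
  (volume.real (Metric.ball p ε))⁻¹ •
    innerSL ℝ (indicatorConstLp 2 (s := Metric.ball p ε) measurableSet_ball
      measure_ball_lt_top.ne (1 : ℝ))

theorem ballAverage_apply (p : E) (ε : ℝ) (f : Lp ℝ 2 (volume : Measure E)) :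
    ballAverage p ε f = ⨍ y in Metric.ball p ε, f y := by
  rw [setAverage_eq, ← L2.inner_indicatorConstLp_one measurableSet_ball measure_ball_lt_top.ne]
  rfl

theorem enorm_sub_setAverage_ball_sq_le {ψ : E → ℝ} (hψ : Continuous ψ) {ε : ℝ} (hε : 0 < ε)
    {x p : E} (hpx : dist p x < ε) :
    ‖ψ x - ⨍ y in Metric.ball p ε, ψ y‖ₑ ^ 2 ≤ (volume (Metric.ball (0 : E) ε))⁻¹ *
      ∫⁻ z in Metric.ball (0 : E) (2 * ε), ‖ψ (x + z) - ψ x‖ₑ ^ 2 := by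
  have : IsFiniteMeasure (volume.restrict (Metric.ball p ε)) :=
    isFiniteMeasure_restrict.2 measure_ball_lt_top.ne
  have : NeZero (volume.restrict (Metric.ball p ε)) :=
    ⟨Measure.restrict_eq_zero.not.2 (Metric.measure_ball_pos _ _ hε).ne'⟩
  have hint : IntegrableOn ψ (Metric.ball p ε) :=
    hψ.locallyIntegrable.integrableOn_isCompact (isCompact_closedBall p ε) |>.mono_set
      Metric.ball_subset_closedBall
  refine (enorm_sub_average_sq_le hint (ψ x)).trans ?_
  rw [Measure.restrict_apply_univ, Measure.addHaar_ball_center]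
  refine mul_le_mul_right ?_ _
  rw [← lintegral_indicator measurableSet_ball, ← lintegral_indicator measurableSet_ball,
    ← lintegral_add_left_eq_self _ x]
  refine lintegral_mono fun z ↦ indicator_apply_le' (fun hz ↦ ?_) fun _ ↦ zero_le
  have hz' : z ∈ Metric.ball (0 : E) (2 * ε) := by
    have := (dist_triangle (x + z) p x).trans_lt (add_lt_add (Metric.mem_ball.1 hz) hpx)
    rwa [← two_mul, dist_self_add_left, ← mem_ball_zero_iff] at this
  rw [indicator_of_mem hz', enorm_sub_rev]

theorem lintegral_lintegral_ball_translate_sub_sq_le {ψ : E → ℝ} (hψ : ContDiff ℝ 1 ψ) {ε : ℝ}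
    (hε : 0 < ε) :
    ∫⁻ x, (volume (Metric.ball (0 : E) ε))⁻¹ *
        ∫⁻ z in Metric.ball (0 : E) (2 * ε), ‖ψ (x + z) - ψ x‖ₑ ^ 2 ≤
      ENNReal.ofReal (2 ^ Module.finrank ℝ E * (2 * ε) ^ 2) * ∫⁻ x, ‖gradient ψ x‖ₑ ^ 2 := by
  set b := volume (Metric.ball (0 : E) ε)
  have hb0 : b ≠ 0 := (Metric.measure_ball_pos _ _ hε).ne'
  have hcont : Continuous fun q : E × E ↦ ψ (q.1 + q.2) - ψ q.1 := by
    have := hψ.continuous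
    fun_prop
  have hdouble : volume (Metric.ball (0 : E) (2 * ε)) =
      ENNReal.ofReal (2 ^ Module.finrank ℝ E) * b := by
    rw [Measure.addHaar_ball_mul_of_pos _ _ two_pos]
  have hshift : ∀ z ∈ Metric.ball (0 : E) (2 * ε), ∫⁻ x, ‖ψ (x + z) - ψ x‖ₑ ^ 2 ≤
      ENNReal.ofReal ((2 * ε) ^ 2) * ∫⁻ x, ‖gradient ψ x‖ₑ ^ 2 := fun z hz ↦ by
    refine (lintegral_enorm_translate_sub_sq_le hψ z).trans ?_
    gcongr
    rw [← ofReal_norm, ← ENNReal.ofReal_pow (norm_nonneg _)]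
    gcongr
    exact (mem_ball_zero_iff.1 hz).le
  rw [lintegral_const_mul' _ _ (ENNReal.inv_ne_top.mpr hb0),
    lintegral_lintegral_swap (hcont.enorm.measurable.pow_const 2).aemeasurable]
  calc b⁻¹ * ∫⁻ z in Metric.ball (0 : E) (2 * ε), ∫⁻ x, ‖ψ (x + z) - ψ x‖ₑ ^ 2
      ≤ b⁻¹ * ∫⁻ _ in Metric.ball (0 : E) (2 * ε),
          ENNReal.ofReal ((2 * ε) ^ 2) * ∫⁻ x, ‖gradient ψ x‖ₑ ^ 2 := by
        gcongr b⁻¹ * ?_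
        exact setLIntegral_mono' measurableSet_ball hshift
    _ = (b⁻¹ * b) * (ENNReal.ofReal (2 ^ Module.finrank ℝ E) * ENNReal.ofReal ((2 * ε) ^ 2) *
          ∫⁻ x, ‖gradient ψ x‖ₑ ^ 2) := by
        rw [setLIntegral_const, hdouble]; ring
    _ = _ := by
        rw [ENNReal.inv_mul_cancel hb0 measure_ball_lt_top.ne, one_mul,
          ENNReal.ofReal_mul (by positivity)]

theorem H10.exists_isCompactOperator_norm_val_sub_le (hΩ : MeasurableSet Ω)
    (hb : Bornology.IsBounded Ω) {ε : ℝ} (hε : 0 < ε) :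
    ∃ P : Lp ℝ 2 (volume : Measure E) →L[ℝ] Lp ℝ 2 (volume : Measure E),
      IsCompactOperator P ∧ ∀ u ∈ H10 Ω,
        ‖val u - P (val u)‖ ≤ √(2 ^ Module.finrank ℝ E) * (2 * ε) * ‖grad u‖ := by
  have : ProperSpace E := FiniteDimensional.proper_real E
  obtain ⟨s, hs⟩ := exists_simpleFunc_dist_lt
    (hb.isCompact_closure.totallyBounded.subset subset_closure) hε
  obtain ⟨P, hPcompact, hP⟩ := exists_isCompactOperator_ae_eq_indicator hΩ
    (hb.measure_lt_top (μ := volume)).ne s fun p ↦ ballAverage p ε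
  refine ⟨P, hPcompact, H10.induction (isClosed_le (by fun_prop) (by fun_prop)) fun ψ h ↦ ?_⟩
  set F := val h.toL2Pair
  have hF : F =ᵐ[volume] ψ := h.coeFn_val
  have hsub : MemLp (fun x ↦ ψ x - P F x) 2 (volume : Measure E) := h.memLp.sub (Lp.memLp (P F))
  have hsub_eq : F - P F = hsub.toLp _ := by
    apply Lp.ext
    filter_upwards [Lp.coeFn_sub F (P F), hsub.coeFn_toLp, hF] with x h1 h2 h3
    rw [h1, h2, Pi.sub_apply, h3]
  rw [hsub_eq, h.grad_toL2Pair]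
  refine norm_le_mul_norm_of_enorm_sq_le (by positivity) ?_
  rw [enorm_toLp_two_sq, enorm_toLp_two_sq, mul_pow, Real.sq_sqrt (by positivity)]
  refine (lintegral_mono_ae ?_).trans
    (lintegral_lintegral_ball_translate_sub_sq_le h.contDiff hε)
  filter_upwards [hP F] with x hx
  rw [hx]
  by_cases hxΩ : x ∈ Ω
  · rw [indicator_of_mem hxΩ, ballAverage_apply, average_congr (ae_restrict_of_ae hF)]
    exact enorm_sub_setAverage_ball_sq_le h.contDiff.continuous hε (hs x hxΩ)
  · simp [hxΩ, h.apply_eq_zero]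

theorem H10.isCompactOperator_val (hΩ : MeasurableSet Ω) (hb : Bornology.IsBounded Ω) :
    IsCompactOperator (val.comp (H10 Ω).subtypeL) := by
  choose P hPcompact hP using fun n : ℕ ↦
    H10.exists_isCompactOperator_norm_val_sub_le hΩ hb (Nat.one_div_pos_of_nat (α := ℝ) (n := n))
  refine isCompactOperator_of_tendsto (l := atTop)
    (F := fun n ↦ (P n).comp (val.comp (H10 Ω).subtypeL)) ?_
    (Eventually.of_forall fun n ↦ (hPcompact n).comp_clm _)
  refine (tendsto_iff_norm_sub_tendsto_zero
    (E := H10 Ω →L[ℝ] Lp ℝ 2 (volume : Measure E))).2 ?_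
  have hlim : Tendsto (fun n : ℕ ↦ √(2 ^ Module.finrank ℝ E) * (2 * (1 / ((n : ℝ) + 1))))
      atTop (𝓝 0) := by
    simpa using (tendsto_one_div_add_atTop_nhds_zero_nat (𝕜 := ℝ)).const_mul 2 |>.const_mul
      (√(2 ^ Module.finrank ℝ E))
  refine squeeze_zero (fun n ↦ by positivity) (fun n ↦ ?_) hlim
  refine ContinuousLinearMap.opNorm_le_bound _ (by positivity) fun u ↦ ?_
  rw [sub_apply, norm_sub_rev]
  exact (hP n u u.2).trans (by gcongr; exact L2Pair.norm_grad_le _)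

end Rellich

section Variational

open Filter Topology L2Pair

section KineticPotential

variable {M : ℝ → ℝ}

/-- The potential `t ↦ ∫₀ᵗ s M(s) ds` of the nonlocal coefficient `M`. Written in the variable
`r = s²`, it makes `v ↦ kineticPotential M ‖v‖` visibly differentiable at the origin. -/
def kineticPotential (M : ℝ → ℝ) (t : ℝ) : ℝ := 2⁻¹ * ∫ r in 0..t ^ 2, M √r

theorem kineticPotential_zero (M : ℝ → ℝ) : kineticPotential M 0 = 0 := by
  simp [kineticPotential]

theorem continuous_kineticPotential (hM : Continuous M) : Continuous (kineticPotential M) :=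
  continuous_const.mul ((intervalIntegral.continuous_primitive
    (fun _ _ ↦ (hM.comp continuous_sqrt).intervalIntegrable _ _) 0).comp (continuous_pow 2))

theorem mul_sub_le_kineticPotential_sub (hM : Continuous M) {m s t : ℝ} (hm : ∀ r, m ≤ M r)
    (hs : 0 ≤ s) (hst : s ≤ t) :
    2⁻¹ * (m * (t ^ 2 - s ^ 2)) ≤ kineticPotential M t - kineticPotential M s := by
  have hint (a b : ℝ) : IntervalIntegrable (fun r ↦ M √r) volume a b :=
    (hM.comp continuous_sqrt).intervalIntegrable a b
  rw [kineticPotential, kineticPotential, ← mul_sub,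
    intervalIntegral.integral_interval_sub_left (hint _ _) (hint _ _)]
  gcongr
  simpa [mul_comm] using intervalIntegral.integral_mono_on (μ := volume)
    (pow_le_pow_left₀ hs hst 2) intervalIntegrable_const (hint _ _) fun r _ ↦ hm √r

theorem monotoneOn_kineticPotential (hM : Continuous M) (hM0 : ∀ r, 0 ≤ M r) :
    MonotoneOn (kineticPotential M) (Ici 0) := fun s hs t _ hst ↦ by
  simpa using mul_sub_le_kineticPotential_sub hM hM0 hs hst

theorem hasGradientAt_kineticPotential_norm {Y : Type*} [NormedAddCommGroup Y]
    [InnerProductSpace ℝ Y] [CompleteSpace Y] (hM : Continuous M) (v : Y) :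
    HasGradientAt (fun v : Y ↦ kineticPotential M ‖v‖) (M ‖v‖ • v) v := by
  have hprimitive := (hM.comp continuous_sqrt).integral_hasStrictDerivAt 0 (‖v‖ ^ 2)
  have hcomp := (hprimitive.hasDerivAt.comp_hasFDerivAt v
    (hasStrictFDerivAt_norm_sq v).hasFDerivAt).const_mul 2⁻¹
  refine hasGradientAt_iff_hasFDerivAt.2 (HasFDerivAt.congr_fderiv hcomp ?_)
  ext w
  simp [sqrt_sq (norm_nonneg v)]
  ring

end KineticPotential

section SuperpositionEnergy

variable {α : Type*} [MeasurableSpace α] {μ : Measure α} {g : ℝ → ℝ} {K : ℝ≥0}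

theorem abs_integral_sub_mul_le (hg : LipschitzWith K g) (a b : ℝ) :
    |(∫ s in a..b, g s) - g a * (b - a)| ≤ K * (b - a) ^ 2 := by
  have hsub : (∫ s in a..b, g s) - g a * (b - a) = ∫ s in a..b, (g s - g a) := by
    rw [intervalIntegral.integral_sub (hg.continuous.intervalIntegrable _ _)
      intervalIntegrable_const]
    simp [mul_comm]
  have hbound : ∀ s ∈ uIoc a b, ‖g s - g a‖ ≤ K * |b - a| := fun s hs ↦
    (hg.norm_sub_le s a).trans (by gcongr; exact abs_sub_left_of_mem_uIcc (uIoc_subset_uIcc hs))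
  calc |(∫ s in a..b, g s) - g a * (b - a)|
      ≤ K * |b - a| * |b - a| := hsub ▸ intervalIntegral.norm_integral_le_of_norm_le_const hbound
    _ = K * (b - a) ^ 2 := by rw [mul_assoc, abs_mul_abs_self, sq]

/-- The energy `w ↦ ∫ G(w)`, where `G` is the primitive of `g` vanishing at `0`. -/
def superpositionEnergy (g : ℝ → ℝ) (w : Lp ℝ 2 μ) : ℝ := ∫ x, (∫ s in 0..w x, g s) ∂μ

theorem integrable_integral_comp (hg : LipschitzWith K g) (hg0 : g 0 = 0) (w : Lp ℝ 2 μ) :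
    Integrable (fun x ↦ ∫ s in 0..w x, g s) μ := by
  have hprimitive : Continuous fun t ↦ ∫ s in 0..t, g s :=
    intervalIntegral.continuous_primitive (fun _ _ ↦ hg.continuous.intervalIntegrable _ _) 0
  refine ((Lp.memLp w).integrable_sq.const_mul (K : ℝ)).mono'
    (hprimitive.comp_aestronglyMeasurable (Lp.aestronglyMeasurable w))
    (Eventually.of_forall fun x ↦ ?_)
  simpa [hg0] using abs_integral_sub_mul_le hg 0 (w x)

theorem superpositionEnergy_zero (g : ℝ → ℝ) : superpositionEnergy g (0 : Lp ℝ 2 μ) = 0 := by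
  refine integral_eq_zero_of_ae ?_
  filter_upwards [Lp.coeFn_zero ℝ 2 μ] with x hx
  rw [hx, Pi.zero_apply, intervalIntegral.integral_same]

theorem abs_superpositionEnergy_add_sub_le (hg : LipschitzWith K g) (hg0 : g 0 = 0)
    (w h : Lp ℝ 2 μ) :
    |superpositionEnergy g (w + h) - superpositionEnergy g w - inner ℝ (hg.compLp hg0 w) h| ≤
      K * ‖h‖ ^ 2 := by
  have hint := integrable_integral_comp (μ := μ) hg hg0
  have hnorm : ‖h‖ ^ 2 = ∫ x, h x ^ 2 ∂μ := by
    rw [← real_inner_self_eq_norm_sq, L2.inner_def]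
    simp [sq]
  have hsub : Integrable (fun x ↦ (∫ s in (0 : ℝ)..(w + h) x, g s) - ∫ s in (0 : ℝ)..w x, g s) μ :=
    (hint (w + h)).sub (hint w)
  rw [superpositionEnergy, superpositionEnergy, L2.inner_def, ← integral_sub (hint _) (hint _),
    ← integral_sub hsub (L2.integrable_inner _ _), hnorm, ← integral_const_mul,
    ← norm_eq_abs]
  refine norm_integral_le_of_norm_le ((Lp.memLp h).integrable_sq.const_mul _) ?_
  filter_upwards [Lp.coeFn_add w h, hg.coeFn_compLp hg0 w] with x hadd hcomp
  have hcont := hg.continuous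
  rw [hadd, hcomp, intervalIntegral.integral_interval_sub_left
    (hcont.intervalIntegrable _ _) (hcont.intervalIntegrable _ _)]
  simpa [mul_comm] using abs_integral_sub_mul_le hg (w x) (w x + h x)

theorem hasGradientAt_superpositionEnergy (hg : LipschitzWith K g) (hg0 : g 0 = 0)
    (w : Lp ℝ 2 μ) : HasGradientAt (superpositionEnergy g) (hg.compLp hg0 w) w := by
  rw [hasGradientAt_iff_isLittleO_nhds_zero]
  have hquad : (fun h : Lp ℝ 2 μ ↦ superpositionEnergy g (w + h) - superpositionEnergy g w -
      inner ℝ (hg.compLp hg0 w) h) =O[𝓝 0] fun h ↦ ‖h‖ ^ 2 :=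
    Asymptotics.IsBigO.of_bound K (Eventually.of_forall fun h ↦ by
      simpa using abs_superpositionEnergy_add_sub_le hg hg0 w h)
  exact hquad.trans_isLittleO (Asymptotics.isLittleO_norm_pow_id one_lt_two)

theorem superpositionEnergy_le {C : ℝ} (hg : LipschitzWith K g) (hg0 : g 0 = 0)
    (hgC : ∀ s, |g s| ≤ C) {Ω : Set α} (hΩ : MeasurableSet Ω) (hμΩ : μ Ω ≠ ∞) {w : Lp ℝ 2 μ}
    (hw : ∀ᵐ x ∂μ, x ∉ Ω → w x = 0) :
    superpositionEnergy g w ≤ C * ‖indicatorConstLp 2 hΩ hμΩ (1 : ℝ)‖ * ‖w‖ := by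
  have hint := L2.integrable_inner (𝕜 := ℝ) (indicatorConstLp 2 hΩ hμΩ (1 : ℝ)) |w|
  have hC : 0 ≤ C := (abs_nonneg _).trans (hgC 0)
  calc superpositionEnergy g w
      ≤ C * inner ℝ (indicatorConstLp 2 hΩ hμΩ (1 : ℝ)) |w| := by
        rw [superpositionEnergy, L2.inner_def, ← integral_const_mul]
        refine integral_mono_ae (integrable_integral_comp hg hg0 w) (hint.const_mul C) ?_
        filter_upwards [hw, Lp.coeFn_abs w, indicatorConstLp_coeFn (p := 2) (hs := hΩ)
          (hμs := hμΩ) (c := (1 : ℝ))] with x hwx habs hind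
        rw [habs, hind]
        by_cases hx : x ∈ Ω
        · have := intervalIntegral.norm_integral_le_of_norm_le_const
            (a := 0) (b := w x) fun s _ ↦ (norm_eq_abs (g s)).trans_le (hgC s)
          simpa [hx] using (le_abs_self _).trans this
        · simp [hx, hwx hx]
    _ ≤ C * (‖indicatorConstLp 2 hΩ hμΩ (1 : ℝ)‖ * ‖w‖) := by
        gcongr
        exact (real_inner_le_norm _ _).trans_eq (by rw [norm_abs_eq_norm w])
    _ = C * ‖indicatorConstLp 2 hΩ hμΩ (1 : ℝ)‖ * ‖w‖ := (mul_assoc _ _ _).symm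

end SuperpositionEnergy

variable {E : Type*} [NormedAddCommGroup E] [InnerProductSpace ℝ E] [FiniteDimensional ℝ E]
  [MeasurableSpace E] [BorelSpace E] {Ω : Set E}

/-- `v` is the weak solution in `H¹₀(Ω)` of `-Δv = h`. -/
def IsWeakSolution (Ω : Set E) (v : L2Pair E) (h : Lp ℝ 2 (volume : Measure E)) : Prop :=
  v ∈ H10 Ω ∧ ∀ w ∈ H10 Ω, inner ℝ (grad v) (grad w) = inner ℝ h (val w)

theorem H10.exists_norm_le_mul_norm_grad [Nontrivial E] (hΩ : Bornology.IsBounded Ω) :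
    ∃ C : ℝ, 0 < C ∧ ∀ u ∈ H10 Ω, ‖u‖ ≤ C * ‖grad u‖ := by
  obtain ⟨C, hC, hpoincare⟩ := H10.poincare hΩ
  refine ⟨C + 1, by positivity, fun u hu ↦ abs_le_of_sq_le_sq' ?_ (by positivity) |>.2⟩
  rw [L2Pair.norm_sq]
  have := pow_le_pow_left₀ (norm_nonneg _) (hpoincare u hu) 2
  nlinarith [mul_nonneg hC.le (sq_nonneg ‖grad u‖)]

theorem L2Pair.norm_val_le (u : L2Pair E) : ‖val u‖ ≤ ‖u‖ :=
  le_of_sq_le_sq (by simp [L2Pair.norm_sq]) (norm_nonneg u)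

theorem H10.exists_forall_energy_le [Nontrivial E] (hΩ : MeasurableSet Ω)
    (hb : Bornology.IsBounded Ω) {M : ℝ → ℝ} (hM : Continuous M) {m : ℝ} (hm : 0 < m)
    (hmM : ∀ r, m ≤ M r) {B : Lp ℝ 2 (volume : Measure E) → ℝ} (hB : Continuous B) {L : ℝ}
    (hB0 : B 0 = 0) (hBL : ∀ u ∈ H10 Ω, B (val u) ≤ L * ‖val u‖) :
    ∃ u ∈ H10 Ω, ∀ w ∈ H10 Ω, kineticPotential M ‖grad u‖ - B (val u) ≤
      kineticPotential M ‖grad w‖ - B (val w) := by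
  obtain ⟨C, hC, hgrad⟩ := H10.exists_norm_le_mul_norm_grad hb
  have hM0 : ∀ r, 0 ≤ M r := fun r ↦ hm.le.trans (hmM r)
  suffices hcoercive : ∀ u : H10 Ω, 2 * |L| * C ^ 2 / m < ‖u‖ →
      B (val (u : L2Pair E)) ≤ kineticPotential M ‖grad (u : L2Pair E)‖ by
    obtain ⟨u, hu⟩ := exists_forall_le_of_isCompactOperator
      (H10.isCompactOperator_val hΩ hb) (grad.comp (H10 Ω).subtypeL)
      (monotoneOn_kineticPotential hM hM0) (continuous_kineticPotential hM) hB fun u hu ↦ by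
        simpa [kineticPotential_zero, hB0] using hcoercive u hu
    exact ⟨u, u.2, fun w hw ↦ hu ⟨w, hw⟩⟩
  intro u hu
  have hkinetic := mul_sub_le_kineticPotential_sub hM hmM le_rfl (norm_nonneg (grad (u : L2Pair E)))
  have hlinear : B (val (u : L2Pair E)) ≤ |L| * ‖(u : L2Pair E)‖ :=
    (hBL u u.2).trans (mul_le_mul (le_abs_self L) (norm_val_le _) (norm_nonneg _) (abs_nonneg L))
  have hcoercive : |L| * ‖(u : L2Pair E)‖ ≤ 2⁻¹ * (m * ‖grad (u : L2Pair E)‖ ^ 2) := by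
    have hsq := pow_le_pow_left₀ (norm_nonneg _) (hgrad u u.2) 2
    rw [div_lt_iff₀ hm] at hu
    refine le_of_mul_le_mul_left ?_ (pow_pos hC 2)
    have := mul_le_mul_of_nonneg_right hu.le (norm_nonneg (u : L2Pair E))
    rw [Submodule.coe_norm] at this
    nlinarith
  exact hlinear.trans (hcoercive.trans (by simpa [kineticPotential_zero] using hkinetic))

theorem exists_isWeakSolution_nonlocal [Nontrivial E] (hΩ : MeasurableSet Ω)
    (hb : Bornology.IsBounded Ω) {M : ℝ → ℝ} (hM : Continuous M) {m : ℝ} (hm : 0 < m)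
    (hmM : ∀ r, m ≤ M r) {g : ℝ → ℝ} {K : ℝ≥0} (hg : LipschitzWith K g) (hg0 : g 0 = 0) {C : ℝ}
    (hgC : ∀ s, |g s| ≤ C) (h : Lp ℝ 2 (volume : Measure E)) :
    ∃ u : L2Pair E, IsWeakSolution Ω (M ‖grad u‖ • u) (hg.compLp hg0 (val u) + h) := by
  let B (v : Lp ℝ 2 (volume : Measure E)) : ℝ := superpositionEnergy g v + inner ℝ h v
  have hB (v) : HasFDerivAt B (innerSL ℝ (hg.compLp hg0 v + h)) v := by
    rw [map_add]
    exact (hasGradientAt_superpositionEnergy hg hg0 v).hasFDerivAt.add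
      (innerSL ℝ h).hasFDerivAt
  have hμΩ : (volume : Measure E) Ω ≠ ∞ := hb.measure_lt_top.ne
  have hBL (u) (hu : u ∈ H10 Ω) : B (val u) ≤
      (C * ‖indicatorConstLp 2 hΩ hμΩ (1 : ℝ)‖ + ‖h‖) * ‖val u‖ := by
    rw [add_mul]
    exact add_le_add (superpositionEnergy_le hg hg0 hgC hΩ _ (H10.val_ae_eq_zero hΩ _ hu))
      (real_inner_le_norm h _)
  obtain ⟨u, hu, hmin⟩ := H10.exists_forall_energy_le hΩ hb hM hm hmM
    (continuous_iff_continuousAt.2 fun v ↦ (hB v).continuousAt)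
    (by simp [B, superpositionEnergy_zero]) hBL
  refine ⟨u, (H10 Ω).smul_mem _ hu, fun w hw ↦ ?_⟩
  have hkinetic := (hasGradientAt_kineticPotential_norm hM (grad u)).hasFDerivAt
  have hderiv : HasFDerivAt (fun v ↦ kineticPotential M ‖grad v‖ - B (val v)) _ u :=
    (hkinetic.comp u grad.hasFDerivAt).sub ((hB _).comp u val.hasFDerivAt)
  have hline := hderiv.comp_hasDerivAt_of_eq (0 : ℝ)
    (((hasDerivAt_id 0).smul_const w).const_add u) (by simp)
  have hlocal := IsLocalMin.hasDerivAt_eq_zero (Eventually.of_forall fun t ↦ by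
    simpa using hmin (u + t • w) ((H10 Ω).add_mem hu ((H10 Ω).smul_mem t hw))) hline
  simpa [sub_eq_zero, inner_add_left, real_inner_smul_left] using hlocal

end Variational

section ClassicalSolution

open Filter Topology L2Pair

section Green

variable {E : Type*} [NormedAddCommGroup E] {Ω : Set E}

theorem integrable_inner_of_tsupport_subset {F : Type*} [NormedAddCommGroup F]
    [InnerProductSpace ℝ F] [MeasurableSpace E] [OpensMeasurableSpace E] {μ : Measure E}
    [IsFiniteMeasureOnCompacts μ] (hΩ : IsOpen Ω) {a b : E → F} (ha : ContinuousOn a Ω)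
    (hb : Continuous b) (hbc : HasCompactSupport b) (hbΩ : tsupport b ⊆ Ω) :
    Integrable (fun x ↦ inner ℝ (a x) (b x)) μ := by
  have hsupp : tsupport (fun x ↦ inner ℝ (a x) (b x)) ⊆ tsupport b :=
    closure_mono fun x hx hbx ↦ hx (by simp [hbx])
  refine Continuous.integrable_of_hasCompactSupport ?_
    (hbc.of_isClosed_subset (isClosed_tsupport _) hsupp)
  exact (ha.inner hb.continuousOn).continuous_of_tsupport_subset hΩ (hsupp.trans hbΩ)

variable [InnerProductSpace ℝ E]

theorem continuousOn_gradient [CompleteSpace E] (hΩ : IsOpen Ω) {w : E → ℝ}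
    (hw : ContDiffOn ℝ 1 w Ω) : ContinuousOn (gradient w) Ω :=
  (InnerProductSpace.toDual ℝ E).symm.continuous.comp_continuousOn
    (hw.continuousOn_fderiv_of_isOpen hΩ le_rfl)

theorem IsC1Test.tsupport_gradient_subset [CompleteSpace E] {ψ : E → ℝ} (h : IsC1Test Ω ψ) :
    tsupport (gradient ψ) ⊆ Ω :=
  (tsupport_comp_subset (map_zero (InnerProductSpace.toDual ℝ E).symm) (fderiv ℝ ψ)).trans
    ((tsupport_fderiv_subset ℝ).trans h.tsupport_subset)

variable [FiniteDimensional ℝ E] [MeasurableSpace E] [BorelSpace E]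

theorem IsC1Test.integral_mul_fderiv_eq_neg {ψ w : E → ℝ} (h : IsC1Test Ω ψ) (hΩ : IsOpen Ω)
    (hw : ContDiffOn ℝ 1 w Ω) (e : E) :
    ∫ x, w x * fderiv ℝ ψ x e = -∫ x, fderiv ℝ w x e * ψ x := by
  have hψ := h.contDiff.continuous
  have hψ' : Continuous (fderiv ℝ ψ · e) :=
    (h.contDiff.continuous_fderiv one_ne_zero).clm_apply continuous_const
  have hw' : ContinuousOn (fderiv ℝ w · e) Ω :=
    (hw.continuousOn_fderiv_of_isOpen hΩ le_rfl).clm_apply continuousOn_const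
  have hint {a b : E → ℝ} (ha : ContinuousOn a Ω) (hb : Continuous b)
      (hbψ : tsupport b ⊆ tsupport ψ) : Integrable fun x ↦ a x * b x := by
    simpa [mul_comm] using integrable_inner_of_tsupport_subset hΩ ha hb
      (h.hasCompactSupport.of_isClosed_subset (isClosed_tsupport _) hbψ)
      (hbψ.trans h.tsupport_subset)
  exact integral_mul_fderiv_eq_neg_fderiv_mul_of_integrable (hint hw' hψ subset_rfl)
    (hint hw.continuousOn hψ' (tsupport_fderiv_apply_subset ℝ e))
    (hint hw.continuousOn hψ subset_rfl)
    (fun x hx ↦ (hw.differentiableOn one_ne_zero).differentiableAt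
      (hΩ.mem_nhds (h.tsupport_subset hx)))
    fun x _ ↦ h.differentiable x

theorem IsC1Test.integral_inner_gradient_eq {N : ℕ} {Ω : Set (EuclideanSpace ℝ (Fin N))}
    {ψ w : EuclideanSpace ℝ (Fin N) → ℝ} (h : IsC1Test Ω ψ) (hΩ : IsOpen Ω)
    (hw : ContDiffOn ℝ 2 w Ω) :
    ∫ x, inner ℝ (gradient w x) (gradient ψ x) = ∫ x, -lapl w x * ψ x := by
  have hw1 (e) : ContDiffOn ℝ 1 (fderiv ℝ w · e) Ω :=
    (hw.fderiv_of_isOpen hΩ (by norm_num)).clm_apply contDiffOn_const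
  have hw2 (e e') : ContinuousOn (fderiv ℝ (fderiv ℝ w · e) · e') Ω :=
    ((hw1 e).continuousOn_fderiv_of_isOpen hΩ le_rfl).clm_apply continuousOn_const
  have hcoord (x) : inner ℝ (gradient w x) (gradient ψ x) =
      ∑ i, fderiv ℝ w x (EuclideanSpace.single i 1) *
        fderiv ℝ ψ x (EuclideanSpace.single i 1) := by
    rw [← (EuclideanSpace.basisFun (Fin N) ℝ).sum_inner_mul_inner]
    refine Finset.sum_congr rfl fun i _ ↦ ?_
    rw [real_inner_comm (gradient ψ x), inner_gradient_left, inner_gradient_left,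
      EuclideanSpace.basisFun_apply]
  have hlapl (x) : -lapl w x * ψ x = ∑ i, -(fderiv ℝ
      (fderiv ℝ w · (EuclideanSpace.single i 1)) x (EuclideanSpace.single i 1) * ψ x) := by
    rw [Finset.sum_neg_distrib, ← Finset.sum_mul, lapl, neg_mul]
  simp_rw [hcoord, hlapl]
  rw [integral_finsetSum, integral_finsetSum]
  · refine Finset.sum_congr rfl fun i _ ↦ ?_
    rw [integral_neg, h.integral_mul_fderiv_eq_neg hΩ (hw1 _)]
  · intro i _
    simpa [mul_comm] using (integrable_inner_of_tsupport_subset hΩ (hw2 _ _)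
      h.contDiff.continuous h.hasCompactSupport h.tsupport_subset).neg
  · intro i _
    simpa [mul_comm] using integrable_inner_of_tsupport_subset hΩ (hw1 _).continuousOn
      ((h.contDiff.continuous_fderiv one_ne_zero).clm_apply continuous_const)
      (h.hasCompactSupport.fderiv_apply ℝ _)
      ((tsupport_fderiv_apply_subset ℝ _).trans h.tsupport_subset)

end Green

/-- The primitive of `t ↦ smoothTransition (t - 1)`: a `C¹` contraction vanishing near `0` and
close to the identity at `+∞`. -/
def softTruncation (s : ℝ) : ℝ := ∫ t in 0..s, smoothTransition (t - 1)

theorem continuous_smoothTransition_sub_one : Continuous fun t ↦ smoothTransition (t - 1) :=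
  smoothTransition.continuous.comp (continuous_sub_right 1)

theorem hasDerivAt_softTruncation (s : ℝ) :
    HasDerivAt softTruncation (smoothTransition (s - 1)) s :=
  (continuous_smoothTransition_sub_one.integral_hasStrictDerivAt 0 s).hasDerivAt

theorem contDiff_softTruncation : ContDiff ℝ 1 softTruncation := by
  refine contDiff_one_iff_deriv.2 ⟨fun s ↦ (hasDerivAt_softTruncation s).differentiableAt, ?_⟩
  rw [show deriv softTruncation = _ from funext fun s ↦ (hasDerivAt_softTruncation s).deriv]
  exact continuous_smoothTransition_sub_one

theorem softTruncation_nonneg {s : ℝ} (hs : 0 ≤ s) : 0 ≤ softTruncation s :=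
  intervalIntegral.integral_nonneg hs fun _ _ ↦ smoothTransition.nonneg _

theorem softTruncation_le {s : ℝ} (hs : 0 ≤ s) : softTruncation s ≤ s := by
  simpa [softTruncation] using intervalIntegral.integral_mono_on (μ := volume) hs
    (continuous_smoothTransition_sub_one.intervalIntegrable 0 s)
    (intervalIntegrable_const (c := (1 : ℝ))) fun t _ ↦ smoothTransition.le_one (t - 1)

theorem softTruncation_eq_zero {s : ℝ} (hs : s ≤ 1) : softTruncation s = 0 := by
  have hzero : ∀ t ∈ uIcc 0 s, smoothTransition (t - 1) = 0 := fun t ht ↦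
    smoothTransition.zero_of_nonpos (sub_nonpos.2 (ht.2.trans (max_le zero_le_one hs)))
  simp [softTruncation, intervalIntegral.integral_congr hzero]

theorem sub_two_le_softTruncation {s : ℝ} (hs : 0 ≤ s) : s - 2 ≤ softTruncation s := by
  obtain hs2 | hs2 := le_total s 2
  · linarith [softTruncation_nonneg hs]
  have hone : ∀ t ∈ uIcc 2 s, smoothTransition (t - 1) = 1 := fun t ht ↦ by
    rw [uIcc_of_le hs2] at ht
    exact smoothTransition.one_of_one_le (by linarith [ht.1])
  have htail : ∫ t in 2..s, smoothTransition (t - 1) = s - 2 := by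
    simp [intervalIntegral.integral_congr hone]
  have hsplit := intervalIntegral.integral_add_adjacent_intervals (μ := volume)
    (continuous_smoothTransition_sub_one.intervalIntegrable 0 2)
    (continuous_smoothTransition_sub_one.intervalIntegrable 2 s)
  rw [htail] at hsplit
  exact (le_add_of_nonneg_left (softTruncation_nonneg zero_le_two)).trans_eq hsplit

variable {E : Type*} [NormedAddCommGroup E] [InnerProductSpace ℝ E] {Ω : Set E} {w : E → ℝ}

/-- Nonnegative functions in `C(Ω̄) ∩ C¹(Ω)` vanishing on `∂Ω`. -/
structure IsNonnegDirichlet (Ω : Set E) (w : E → ℝ) : Prop where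
  continuousOn : ContinuousOn w (closure Ω)
  contDiffOn : ContDiffOn ℝ 1 w Ω
  nonneg : ∀ x ∈ Ω, 0 ≤ w x
  eq_zero_of_mem_frontier : ∀ x ∈ frontier Ω, w x = 0

/-- The compactly supported approximation `k⁻¹ β(k w)` of `w` on `Ω`, with `β` the soft
truncation. -/
def truncate (Ω : Set E) (w : E → ℝ) (k : ℝ) : E → ℝ :=
  Ω.indicator fun x ↦ k⁻¹ * softTruncation (k * w x)

namespace IsNonnegDirichlet

variable {k : ℝ}

theorem isCompact_le [FiniteDimensional ℝ E] (hw : IsNonnegDirichlet Ω w)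
    (hb : Bornology.IsBounded Ω) (c : ℝ) : IsCompact (closure Ω ∩ w ⁻¹' Ici c) :=
  hb.isCompact_closure.of_isClosed_subset
    (hw.continuousOn.preimage_isClosed_of_isClosed isClosed_closure isClosed_Ici) inter_subset_left

theorem le_subset (hw : IsNonnegDirichlet Ω w) (hΩ : IsOpen Ω) {c : ℝ} (hc : 0 < c) :
    closure Ω ∩ w ⁻¹' Ici c ⊆ Ω := by
  rintro x ⟨hx, hcx⟩
  by_contra hxΩ
  refine hc.not_ge (hcx.trans_eq (hw.eq_zero_of_mem_frontier x ?_))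
  exact hΩ.frontier_eq ▸ ⟨hx, hxΩ⟩

theorem isC1Test_truncate [FiniteDimensional ℝ E] (hw : IsNonnegDirichlet Ω w) (hΩ : IsOpen Ω)
    (hb : Bornology.IsBounded Ω) (hk : 0 < k) : IsC1Test Ω (truncate Ω w k) := by
  set S := closure Ω ∩ w ⁻¹' Ici k⁻¹
  have hS : IsCompact S := hw.isCompact_le hb k⁻¹
  have hSΩ : S ⊆ Ω := hw.le_subset hΩ (inv_pos.2 hk)
  have hzero : ∀ x ∉ S, truncate Ω w k x = 0 := fun x hx ↦ by
    by_cases hxΩ : x ∈ Ω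
    · have hlt : w x < k⁻¹ := not_le.1 fun hle ↦ hx ⟨subset_closure hxΩ, hle⟩
      have hle : k * w x ≤ 1 := by simpa [hk.ne'] using mul_le_mul_of_nonneg_left hlt.le hk.le
      simp [truncate, softTruncation_eq_zero hle]
    · exact indicator_of_notMem hxΩ _
  have hsupp : tsupport (truncate Ω w k) ⊆ S :=
    closure_minimal (fun x hx ↦ by_contra fun hxS ↦ hx (hzero x hxS)) hS.isClosed
  refine ⟨contDiff_iff_contDiffAt.2 fun x ↦ ?_, .intro hS hzero, hsupp.trans hSΩ⟩
  by_cases hx : x ∈ Ω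
  · have hwx := hw.contDiffOn.contDiffAt (hΩ.mem_nhds hx)
    have hcomp : ContDiffAt ℝ 1 (fun x ↦ k⁻¹ * softTruncation (k * w x)) x :=
      contDiffAt_const.mul (contDiff_softTruncation.contDiffAt.comp x (contDiffAt_const.mul hwx))
    exact hcomp.congr_of_eventuallyEq (eqOn_indicator.eventuallyEq_of_mem (hΩ.mem_nhds hx))
  · exact contDiffAt_const.congr_of_eventuallyEq
      (eventuallyEq_of_mem (hS.isClosed.isOpen_compl.mem_nhds fun h ↦ hx (hSΩ h)) hzero)

theorem gradient_truncate [FiniteDimensional ℝ E] (hw : IsNonnegDirichlet Ω w) (hΩ : IsOpen Ω)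
    (hb : Bornology.IsBounded Ω) (hk : 0 < k) (x : E) : gradient (truncate Ω w k) x =
      smoothTransition (k * w x - 1) • Ω.indicator (gradient w) x := by
  by_cases hx : x ∈ Ω
  · have hwx := ((hw.contDiffOn.differentiableOn one_ne_zero).differentiableAt
      (hΩ.mem_nhds hx)).hasFDerivAt
    have hderiv := ((hasDerivAt_softTruncation (k * w x)).comp_hasFDerivAt x
      (hwx.const_mul k)).const_mul k⁻¹
    have hlocal : truncate Ω w k =ᶠ[𝓝 x] fun x ↦ k⁻¹ * softTruncation (k * w x) :=
      eqOn_indicator.eventuallyEq_of_mem (hΩ.mem_nhds hx)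
    rw [indicator_of_mem hx, gradient, (hderiv.congr_of_eventuallyEq hlocal).fderiv]
    simp only [gradient, smul_smul, map_smul]
    congr 1
    field_simp
  · simp [hx, (hw.isC1Test_truncate hΩ hb hk).gradient_apply_eq_zero hx]

theorem norm_truncate_le (hw : IsNonnegDirichlet Ω w) (hk : 0 < k) (x : E) :
    ‖truncate Ω w k x‖ ≤ ‖Ω.indicator w x‖ := by
  by_cases hx : x ∈ Ω
  · have hkw : 0 ≤ k * w x := mul_nonneg hk.le (hw.nonneg x hx)
    simp only [truncate, indicator_of_mem hx, norm_mul, norm_inv, norm_of_nonneg hk.le,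
      norm_of_nonneg (softTruncation_nonneg hkw), norm_of_nonneg (hw.nonneg x hx)]
    exact (inv_mul_le_iff₀ hk).2 (softTruncation_le hkw)
  · simp [truncate, hx]

theorem tendsto_truncate (hw : IsNonnegDirichlet Ω w) (x : E) :
    Tendsto (truncate Ω w · x) atTop (𝓝 (Ω.indicator w x)) := by
  by_cases hx : x ∈ Ω
  · simp only [truncate, indicator_of_mem hx]
    have hlower : Tendsto (fun k : ℝ ↦ w x - 2 * k⁻¹) atTop (𝓝 (w x)) := by
      simpa using (tendsto_inv_atTop_zero.const_mul 2).const_sub (w x)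
    refine tendsto_of_tendsto_of_tendsto_of_le_of_le' hlower tendsto_const_nhds ?_ ?_ <;>
      filter_upwards [eventually_gt_atTop 0] with k hk
    · have := sub_two_le_softTruncation (mul_nonneg hk.le (hw.nonneg x hx))
      rw [le_inv_mul_iff₀ hk]
      field_simp
      linarith
    · exact (inv_mul_le_iff₀ hk).2 (softTruncation_le (mul_nonneg hk.le (hw.nonneg x hx)))
  · simp [truncate, hx]

variable [FiniteDimensional ℝ E]

theorem norm_gradient_truncate_le (hw : IsNonnegDirichlet Ω w) (hΩ : IsOpen Ω)
    (hb : Bornology.IsBounded Ω) (hk : 0 < k) (x : E) :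
    ‖gradient (truncate Ω w k) x‖ ≤ ‖Ω.indicator (gradient w) x‖ := by
  rw [hw.gradient_truncate hΩ hb hk, norm_smul, norm_of_nonneg (smoothTransition.nonneg _)]
  exact mul_le_of_le_one_left (norm_nonneg _) (smoothTransition.le_one _)

theorem tendsto_gradient_truncate (hw : IsNonnegDirichlet Ω w) (hΩ : IsOpen Ω)
    (hb : Bornology.IsBounded Ω) (x : E) :
    Tendsto (fun k ↦ gradient (truncate Ω w k) x) atTop (𝓝 (Ω.indicator (gradient w) x)) := by
  refine tendsto_const_nhds.congr' ?_
  by_cases hx : x ∈ Ω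
  · obtain hwx | hwx := (hw.nonneg x hx).eq_or_lt
    · have hmin : IsLocalMin w x := by
        filter_upwards [hΩ.mem_nhds hx] with y hy
        exact hwx ▸ hw.nonneg y hy
      filter_upwards [eventually_gt_atTop 0] with k hk
      rw [hw.gradient_truncate hΩ hb hk]
      simp [hx, gradient, hmin.fderiv_eq_zero]
    · filter_upwards [eventually_gt_atTop 0, eventually_ge_atTop (2 / w x)] with k hk hkw
      have hone : 1 ≤ k * w x - 1 := by linarith [(div_le_iff₀ hwx).1 hkw]
      rw [hw.gradient_truncate hΩ hb hk, smoothTransition.one_of_one_le hone, one_smul]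
  · filter_upwards [eventually_gt_atTop 0] with k hk
    simp [hw.gradient_truncate hΩ hb hk, hx]

end IsNonnegDirichlet

section Lp

variable {α ι F : Type*} [MeasurableSpace α] [NormedAddCommGroup F] {μ : Measure α}

theorem tendsto_toLp_of_dominated {p : ℝ≥0∞} [Fact (1 ≤ p)] (hp : p ≠ ∞) {l : Filter ι}
    [l.IsCountablyGenerated] {f : ι → α → F} {g : α → F} (hf : ∀ i, MemLp (f i) p μ)
    (hg : MemLp g p μ) (hle : ∀ i a, ‖f i a‖ ≤ ‖g a‖)
    (hlim : ∀ a, Tendsto (f · a) l (𝓝 (g a))) :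
    Tendsto (fun i ↦ (hf i).toLp (f i)) l (𝓝 (hg.toLp g)) := by
  have hp0 : p ≠ 0 := (zero_lt_one.trans_le Fact.out).ne'
  have hpos : 0 < p.toReal := ENNReal.toReal_pos hp0 hp
  rw [Lp.tendsto_Lp_iff_tendsto_eLpNorm'']
  simp only [eLpNorm_eq_lintegral_rpow_enorm_toReal hp0 hp]
  suffices hint : Tendsto (fun i ↦ ∫⁻ a, ‖(f i - g) a‖ₑ ^ p.toReal ∂μ) l (𝓝 0) by
    simpa [hpos] using hint.ennrpow_const (1 / p.toReal)
  rw [← lintegral_zero (μ := μ)]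
  refine tendsto_lintegral_filter_of_dominated_convergence'
    (fun a ↦ (2 * ‖g a‖ₑ) ^ p.toReal) ?_ ?_ ?_ ?_
  · exact .of_forall fun i ↦ ((hf i).sub hg).aestronglyMeasurable.enorm.pow_const _
  · refine .of_forall fun i ↦ .of_forall fun a ↦ ?_
    have : ‖f i a - g a‖ₑ ≤ 2 * ‖g a‖ₑ := by
      refine enorm_sub_le.trans ?_
      rw [two_mul]
      gcongr
      exact enorm_le_iff_norm_le.2 (hle i a)
    gcongr
    exact this
  · simp_rw [ENNReal.mul_rpow_of_nonneg _ _ hpos.le]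
    rw [lintegral_const_mul' _ _ (by simp)]
    exact ENNReal.mul_ne_top (by simp)
      (lintegral_rpow_enorm_lt_top_of_eLpNorm_lt_top hp0 hp hg.eLpNorm_lt_top).ne
  · refine .of_forall fun a ↦ ?_
    have hdiff : Tendsto (fun i ↦ (f i - g) a) l (𝓝 0) := by
      simpa using (hlim a).sub_const (g a)
    simpa [hpos] using hdiff.enorm.ennrpow_const p.toReal

variable [TopologicalSpace α] [OpensMeasurableSpace α] [SecondCountableTopologyEither α F]

theorem memLp_indicator_of_continuousOn {s : Set α} (hs : MeasurableSet s) (hμs : μ s ≠ ∞)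
    (hsc : IsCompact (closure s)) {f : α → F} (hf : ContinuousOn f (closure s)) (p : ℝ≥0∞) :
    MemLp (s.indicator f) p μ := by
  obtain ⟨C, hC⟩ := hsc.exists_bound_of_continuousOn hf
  rw [memLp_indicator_iff_restrict hs]
  have : IsFiniteMeasure (μ.restrict s) := isFiniteMeasure_restrict.2 hμs
  refine .of_bound ((hf.mono subset_closure).aestronglyMeasurable hs) C ?_
  exact ae_restrict_of_forall_mem hs fun x hx ↦ hC x (subset_closure hx)

end Lp

section Weak

variable [FiniteDimensional ℝ E] [MeasurableSpace E] [BorelSpace E]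

theorem memLp_indicator_of_isBounded (hΩ : IsOpen Ω) (hb : Bornology.IsBounded Ω)
    (hw : ContinuousOn w (closure Ω)) (p : ℝ≥0∞) : MemLp (Ω.indicator w) p volume :=
  memLp_indicator_of_continuousOn hΩ.measurableSet hb.measure_lt_top.ne hb.isCompact_closure hw p

namespace IsNonnegDirichlet

theorem exists_mem_H10 (hw : IsNonnegDirichlet Ω w) (hΩ : IsOpen Ω)
    (hb : Bornology.IsBounded Ω) (hgrad : MemLp (Ω.indicator (gradient w)) 2 volume) :
    ∃ W ∈ H10 Ω, val W =ᵐ[volume] Ω.indicator w ∧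
      grad W =ᵐ[volume] Ω.indicator (gradient w) := by
  have hval := memLp_indicator_of_isBounded hΩ hb hw.continuousOn 2
  have hk (n : ℕ) : 0 < (n + 1 : ℝ) := by positivity
  have htest (n : ℕ) := hw.isC1Test_truncate hΩ hb (hk n)
  have hkatTop : Tendsto (fun n : ℕ ↦ (n + 1 : ℝ)) atTop atTop :=
    tendsto_atTop_add_const_right _ _ tendsto_natCast_atTop_atTop
  have hlim : Tendsto (fun n ↦ (htest n).toL2Pair) atTop
      (𝓝 (WithLp.toLp 2 (hval.toLp _, hgrad.toLp _))) :=
    ((WithLp.prod_continuous_toLp 2 _ _).tendsto _).comp (Tendsto.prodMk_nhds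
      (tendsto_toLp_of_dominated (by simp) (fun n ↦ (htest n).memLp) hval
        (fun n ↦ hw.norm_truncate_le (hk n)) fun x ↦ (hw.tendsto_truncate x).comp hkatTop)
      (tendsto_toLp_of_dominated (by simp) (fun n ↦ (htest n).memLp_gradient) hgrad
        (fun n ↦ hw.norm_gradient_truncate_le hΩ hb (hk n))
        fun x ↦ (hw.tendsto_gradient_truncate hΩ hb x).comp hkatTop))
  exact ⟨_, (Submodule.isClosed_topologicalClosure _).mem_of_tendsto hlim
    (.of_forall fun n ↦ (htest n).toL2Pair_mem_H10), hval.coeFn_toLp, hgrad.coeFn_toLp⟩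

end IsNonnegDirichlet

end Weak

section Laplacian

variable {N : ℕ} {Ω : Set (EuclideanSpace ℝ (Fin N))} {w h : EuclideanSpace ℝ (Fin N) → ℝ}
  {H : Lp ℝ 2 (volume : Measure (EuclideanSpace ℝ (Fin N)))}

theorem IsC1Test.integral_inner_gradient_eq_inner {ψ : EuclideanSpace ℝ (Fin N) → ℝ}
    (hψ : IsC1Test Ω ψ) (hΩ : IsOpen Ω) (hw : ContDiffOn ℝ 2 w Ω)
    (heq : ∀ x ∈ Ω, -lapl w x = h x) (hH : H =ᵐ[volume] Ω.indicator h) :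
    ∫ x, inner ℝ (gradient w x) (gradient ψ x) = inner ℝ H (val hψ.toL2Pair) := by
  rw [hψ.integral_inner_gradient_eq hΩ hw, L2.inner_def]
  refine integral_congr_ae ?_
  filter_upwards [hH, hψ.coeFn_val] with x hHx hψx
  rw [hHx, hψx]
  by_cases hx : x ∈ Ω
  · simp [hx, heq x hx, mul_comm]
  · simp [hx, hψ.apply_eq_zero hx]

namespace IsNonnegDirichlet

theorem norm_grad_truncate_sq_le (hw : IsNonnegDirichlet Ω w) (hw2 : ContDiffOn ℝ 2 w Ω)
    (hΩ : IsOpen Ω) (hb : Bornology.IsBounded Ω) (heq : ∀ x ∈ Ω, -lapl w x = h x)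
    (hH : H =ᵐ[volume] Ω.indicator h) (hval : MemLp (Ω.indicator w) 2 volume) {k : ℝ}
    (hk : 0 < k) : ‖grad (hw.isC1Test_truncate hΩ hb hk).toL2Pair‖ ^ 2 ≤
      ‖H‖ * ‖hval.toLp (Ω.indicator w)‖ := by
  set htest := hw.isC1Test_truncate hΩ hb hk
  have hpointwise (x) : inner ℝ (gradient (truncate Ω w k) x) (gradient (truncate Ω w k) x) ≤
      inner ℝ (gradient w x) (gradient (truncate Ω w k) x) := by
    rw [hw.gradient_truncate hΩ hb hk]
    by_cases hx : x ∈ Ω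
    · rw [indicator_of_mem hx, inner_smul_left, inner_smul_right, RCLike.conj_to_real]
      exact mul_le_of_le_one_left
        (mul_nonneg (smoothTransition.nonneg _) real_inner_self_nonneg) (smoothTransition.le_one _)
    · simp [hx]
  calc ‖grad htest.toL2Pair‖ ^ 2
      = ∫ x, inner ℝ (gradient (truncate Ω w k) x) (gradient (truncate Ω w k) x) := by
        rw [← real_inner_self_eq_norm_sq, L2.inner_def]
        refine integral_congr_ae ?_
        filter_upwards [htest.coeFn_grad] with x hx
        rw [hx]
    _ ≤ ∫ x, inner ℝ (gradient w x) (gradient (truncate Ω w k) x) :=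
        integral_mono (integrable_inner_of_tsupport_subset isOpen_univ
          (continuous_gradient htest.contDiff).continuousOn
          (continuous_gradient htest.contDiff) htest.hasCompactSupport_gradient (subset_univ _))
          (integrable_inner_of_tsupport_subset hΩ (continuousOn_gradient hΩ hw.contDiffOn)
            (continuous_gradient htest.contDiff) htest.hasCompactSupport_gradient
            htest.tsupport_gradient_subset) hpointwise
    _ = inner ℝ H (val htest.toL2Pair) := htest.integral_inner_gradient_eq_inner hΩ hw2 heq hH
    _ ≤ ‖H‖ * ‖hval.toLp (Ω.indicator w)‖ := by
        refine (real_inner_le_norm _ _).trans ?_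
        gcongr
        refine Lp.norm_le_norm_of_ae_le ?_
        filter_upwards [htest.coeFn_val, hval.coeFn_toLp] with x hx hx'
        rw [hx, hx']
        exact hw.norm_truncate_le hk x

theorem memLp_gradient (hw : IsNonnegDirichlet Ω w) (hw2 : ContDiffOn ℝ 2 w Ω)
    (hΩ : IsOpen Ω) (hb : Bornology.IsBounded Ω) (heq : ∀ x ∈ Ω, -lapl w x = h x)
    (hH : H =ᵐ[volume] Ω.indicator h) : MemLp (Ω.indicator (gradient w)) 2 volume := by
  have hval := memLp_indicator_of_isBounded hΩ hb hw.continuousOn 2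
  refine ⟨(aestronglyMeasurable_indicator_iff hΩ.measurableSet).2
    ((continuousOn_gradient hΩ hw.contDiffOn).aestronglyMeasurable hΩ.measurableSet),
    lt_of_le_of_lt (Lp.eLpNorm_le_of_ae_tendsto (u := atTop)
      (C := ENNReal.ofReal √(‖H‖ * ‖hval.toLp (Ω.indicator w)‖)) ?_ (fun k ↦ ?_)
      (.of_forall (hw.tendsto_gradient_truncate hΩ hb))) ENNReal.ofReal_lt_top⟩
  · filter_upwards [eventually_gt_atTop 0] with k hk
    have hbound := Real.le_sqrt_of_sq_le (hw.norm_grad_truncate_sq_le hw2 hΩ hb heq hH hval hk)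
    rwa [IsC1Test.grad_toL2Pair, Lp.norm_toLp, ← ENNReal.le_ofReal_iff_toReal_le _ (sqrt_nonneg _)]
      at hbound
    exact ((hw.isC1Test_truncate hΩ hb hk).memLp_gradient).eLpNorm_ne_top
  · exact ((InnerProductSpace.toDual ℝ _).symm.continuous.measurable.comp
      (measurable_fderiv ℝ _)).aestronglyMeasurable

end IsNonnegDirichlet

theorem exists_isWeakSolution_of_classical (hw : IsNonnegDirichlet Ω w)
    (hw2 : ContDiffOn ℝ 2 w Ω) (hΩ : IsOpen Ω) (hb : Bornology.IsBounded Ω)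
    (hh : ContinuousOn h (closure Ω)) (heq : ∀ x ∈ Ω, -lapl w x = h x) :
    ∃ W H, IsWeakSolution Ω W H ∧ val W =ᵐ[volume] Ω.indicator w ∧
      H =ᵐ[volume] Ω.indicator h := by
  have hH := (memLp_indicator_of_isBounded hΩ hb hh 2).coeFn_toLp
  obtain ⟨W, hW, hWval, hWgrad⟩ :=
    hw.exists_mem_H10 hΩ hb (hw.memLp_gradient hw2 hΩ hb heq hH)
  refine ⟨W, _, ⟨hW, H10.induction (isClosed_eq (by fun_prop) (by fun_prop)) fun ψ hψ ↦ ?_⟩,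
    hWval, hH⟩
  rw [← hψ.integral_inner_gradient_eq_inner hΩ hw2 heq hH, L2.inner_def]
  refine integral_congr_ae ?_
  filter_upwards [hWgrad, hψ.coeFn_grad] with x hWx hψx
  rw [hWx, hψx]
  by_cases hx : x ∈ Ω
  · rw [indicator_of_mem hx]
  · simp [hψ.gradient_apply_eq_zero hx]

end Laplacian

end ClassicalSolution

section WeakMaximumPrinciple

open Filter Topology L2Pair

/-- The smooth approximation `√(s² + ε²) - ε` of the absolute value, vanishing at `0`. -/
def softAbs (ε s : ℝ) : ℝ := √(s ^ 2 + ε ^ 2) - ε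

section SoftAbs

variable {ε : ℝ}

theorem hasDerivAt_softAbs (hε : 0 < ε) (s : ℝ) :
    HasDerivAt (softAbs ε) (s / √(s ^ 2 + ε ^ 2)) s := by
  have hpos : 0 < s ^ 2 + ε ^ 2 := by positivity
  refine ((((hasDerivAt_pow 2 s).add_const (ε ^ 2)).sqrt hpos.ne').sub_const ε).congr_deriv ?_
  rw [Nat.cast_ofNat, pow_one, mul_div_mul_left _ _ two_ne_zero]

theorem contDiff_softAbs (hε : 0 < ε) : ContDiff ℝ 1 (softAbs ε) :=
  .sub (.sqrt (by fun_prop) fun s ↦ by positivity) contDiff_const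

theorem softAbs_zero (hε : 0 < ε) : softAbs ε 0 = 0 := by
  simp [softAbs, sqrt_sq hε.le]

theorem softAbs_nonneg (ε s : ℝ) : 0 ≤ softAbs ε s :=
  sub_nonneg.2 (le_sqrt_of_sq_le (le_add_of_nonneg_left (sq_nonneg s)))

theorem sub_le_softAbs (ε s : ℝ) : s - ε ≤ softAbs ε s :=
  sub_le_sub_right (le_sqrt_of_sq_le (le_add_of_nonneg_right (sq_nonneg ε))) ε

variable {E : Type*} [NormedAddCommGroup E] [InnerProductSpace ℝ E] {Ω : Set E} {ψ : E → ℝ}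

theorem IsC1Test.softAbs (h : IsC1Test Ω ψ) (hε : 0 < ε) :
    IsC1Test Ω fun x ↦ softAbs ε (ψ x) where
  contDiff := (contDiff_softAbs hε).comp h.contDiff
  hasCompactSupport := h.hasCompactSupport.comp_left (softAbs_zero hε)
  tsupport_subset :=
    (closure_mono (Function.support_comp_subset (softAbs_zero hε) ψ)).trans h.tsupport_subset

theorem norm_gradient_softAbs_le [CompleteSpace E] (hψ : Differentiable ℝ ψ) (hε : 0 < ε) (x : E) :
    ‖gradient (fun x ↦ softAbs ε (ψ x)) x‖ ≤ ‖gradient ψ x‖ := by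
  have hsqrt : 0 < √(ψ x ^ 2 + ε ^ 2) := sqrt_pos.2 (by positivity)
  have hslope : |ψ x / √(ψ x ^ 2 + ε ^ 2)| ≤ 1 := by
    rw [abs_div, abs_of_pos hsqrt, div_le_one hsqrt]
    exact abs_le_sqrt (le_add_of_nonneg_right (sq_nonneg ε))
  have hderiv : HasFDerivAt (fun x ↦ softAbs ε (ψ x)) _ x :=
    (hasDerivAt_softAbs hε (ψ x)).comp_hasFDerivAt x (hψ x).hasFDerivAt
  rw [norm_gradient, norm_gradient, hderiv.fderiv, norm_smul, norm_eq_abs]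
  exact mul_le_of_le_one_left (norm_nonneg _) hslope

end SoftAbs

variable {E : Type*} [NormedAddCommGroup E] [InnerProductSpace ℝ E] [FiniteDimensional ℝ E]
  [MeasurableSpace E] [BorelSpace E] {Ω : Set E} {h : Lp ℝ 2 (volume : Measure E)}

theorem IsC1Test.norm_grad_softAbs_le {ψ : E → ℝ} (hψ : IsC1Test Ω ψ) {ε : ℝ} (hε : 0 < ε) :
    ‖grad (hψ.softAbs hε).toL2Pair‖ ≤ ‖grad hψ.toL2Pair‖ := by
  refine Lp.norm_le_norm_of_ae_le ?_
  filter_upwards [hψ.coeFn_grad, (hψ.softAbs hε).coeFn_grad] with x hx hx'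
  rw [hx, hx']
  exact norm_gradient_softAbs_le hψ.differentiable hε x

theorem IsC1Test.inner_val_sub_softAbs_le {ψ : E → ℝ} (hψ : IsC1Test Ω ψ) {ε : ℝ} (hε : 0 < ε)
    (hΩ : MeasurableSet Ω) (hμΩ : volume Ω ≠ ∞) (hh : ∀ᵐ x, x ∈ Ω → 0 ≤ h x) :
    inner ℝ h (val hψ.toL2Pair - val (hψ.softAbs hε).toL2Pair) ≤
      inner ℝ h (ε • indicatorConstLp 2 hΩ hμΩ (1 : ℝ)) := by
  rw [L2.inner_def, L2.inner_def]
  refine integral_mono_ae (L2.integrable_inner _ _) (L2.integrable_inner _ _) ?_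
  filter_upwards [hh, Lp.coeFn_sub (val hψ.toL2Pair) (val (hψ.softAbs hε).toL2Pair),
    hψ.coeFn_val, (hψ.softAbs hε).coeFn_val, Lp.coeFn_smul ε (indicatorConstLp 2 hΩ hμΩ (1 : ℝ)),
    indicatorConstLp_coeFn (p := 2) (hs := hΩ) (hμs := hμΩ) (c := (1 : ℝ))]
    with x hhx hsub hψx hsoft hsmul hone
  simp only [hsub, hsmul, Pi.sub_apply, Pi.smul_apply, hψx, hsoft, hone, RCLike.inner_apply,
    conj_trivial, smul_eq_mul]
  by_cases hx : x ∈ Ω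
  · rw [indicator_of_mem hx, mul_one]
    exact mul_le_mul_of_nonneg_right (sub_le_comm.1 (sub_le_softAbs ε (ψ x))) (hhx hx)
  · simp [hx, hψ.apply_eq_zero hx, softAbs_zero hε]

theorem H10.exists_nonneg_energy_lt (hΩ : MeasurableSet Ω) (hμΩ : volume Ω ≠ ∞)
    (hh : ∀ᵐ x, x ∈ Ω → 0 ≤ h x) {u : L2Pair E} (hu : u ∈ H10 Ω) {δ : ℝ} (hδ : 0 < δ) :
    ∃ p ∈ H10 Ω, 0 ≤ val p ∧
      ‖grad p‖ ^ 2 - 2 * inner ℝ h (val p) < ‖grad u‖ ^ 2 - 2 * inner ℝ h (val u) + δ := by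
  have hopen : IsOpen {z : L2Pair E | ‖grad z‖ ^ 2 - 2 * inner ℝ h (val z) <
      ‖grad u‖ ^ 2 - 2 * inner ℝ h (val u) + δ / 2} :=
    isOpen_lt (by fun_prop) (by fun_prop)
  obtain ⟨_, hlt, ψ, hψ, rfl⟩ := mem_closure_iff.1 hu _ hopen (by simpa using hδ)
  obtain ⟨ε, hε, hsmall⟩ := exists_pos_mul_lt (half_pos hδ)
    (2 * inner ℝ h (indicatorConstLp 2 hΩ hμΩ (1 : ℝ)))
  refine ⟨(hψ.softAbs hε).toL2Pair, (hψ.softAbs hε).toL2Pair_mem_H10, ?_, ?_⟩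
  · refine (Lp.coeFn_nonneg _).1 ?_
    filter_upwards [(hψ.softAbs hε).coeFn_val] with x hx
    rw [hx]
    exact softAbs_nonneg ε (ψ x)
  · have hgrad := pow_le_pow_left₀ (norm_nonneg _) (hψ.norm_grad_softAbs_le hε) 2
    have hval := hψ.inner_val_sub_softAbs_le hε hΩ hμΩ hh
    rw [inner_sub_right, inner_smul_right] at hval
    rw [mem_ofPred_eq] at hlt
    linarith

-- The weak solution minimises `‖∇z‖² - 2 ⟨h, z⟩`, which taking a soft absolute value hardly
-- increases.
theorem IsWeakSolution.val_nonneg [Nontrivial E] (hΩ : MeasurableSet Ω)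
    (hb : Bornology.IsBounded Ω) {v : L2Pair E} (hv : IsWeakSolution Ω v h)
    (hh : ∀ᵐ x, x ∈ Ω → 0 ≤ h x) : 0 ≤ val v := by
  obtain ⟨C, hC, hpoincare⟩ := H10.poincare hb
  have hclosed : IsClosed {g : Lp ℝ 2 (volume : Measure E) | 0 ≤ g} := isClosed_Ici
  refine hclosed.closure_subset (Metric.mem_closure_iff.2 fun δ hδ ↦ ?_)
  obtain ⟨p, hp, hp0, henergy⟩ :=
    H10.exists_nonneg_energy_lt hΩ hb.measure_lt_top.ne hh hv.1 (sq_pos_of_pos (div_pos hδ hC))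
  have hexcess : ‖grad (v - p)‖ ^ 2 =
      ‖grad p‖ ^ 2 - 2 * inner ℝ h (val p) - (‖grad v‖ ^ 2 - 2 * inner ℝ h (val v)) := by
    rw [map_sub, norm_sub_sq_real, hv.2 p hp, ← hv.2 v hv.1, real_inner_self_eq_norm_sq]
    ring
  refine ⟨val p, hp0, ?_⟩
  calc dist (val v) (val p) ≤ C * ‖grad (v - p)‖ := by
        rw [dist_eq_norm, ← map_sub]
        exact hpoincare _ ((H10 Ω).sub_mem hv.1 hp)
    _ < C * (δ / C) := by
        gcongr
        exact lt_of_pow_lt_pow_left₀ 2 (by positivity) (by linarith)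
    _ = δ := mul_div_cancel₀ δ hC.ne'

theorem H10.integral_inner_grad_mul_eq_neg {χ : E → ℝ} (hχ : IsC1Test univ χ) (e : E) :
    ∀ u ∈ H10 Ω, ∫ x, inner ℝ (grad u x) e * χ x = -∫ x, val u x * fderiv ℝ χ x e := by
  have hfield : MemLp (fun x ↦ χ x • e) 2 (volume : Measure E) :=
    (hχ.contDiff.continuous.smul continuous_const).memLp_of_hasCompactSupport
      (hχ.hasCompactSupport.smul_right (f' := fun _ ↦ e))
  have hderiv : MemLp (fun x ↦ fderiv ℝ χ x e) 2 (volume : Measure E) :=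
    ((hχ.contDiff.continuous_fderiv one_ne_zero).clm_apply
      continuous_const).memLp_of_hasCompactSupport (hχ.hasCompactSupport.fderiv_apply ℝ e)
  have hgrad (u : L2Pair E) :
      ∫ x, inner ℝ (grad u x) e * χ x = inner ℝ (grad u) (hfield.toLp _) := by
    rw [L2.inner_def]
    refine integral_congr_ae ?_
    filter_upwards [hfield.coeFn_toLp] with x hx
    rw [hx, inner_smul_right, mul_comm]
  have hval (u : L2Pair E) :
      ∫ x, val u x * fderiv ℝ χ x e = inner ℝ (val u) (hderiv.toLp _) := by
    rw [L2.inner_def]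
    refine integral_congr_ae ?_
    filter_upwards [hderiv.coeFn_toLp] with x hx
    rw [hx, RCLike.inner_apply, conj_trivial, mul_comm]
  refine H10.induction ?_ fun ψ hψ ↦ ?_
  · simp_rw [hgrad, hval]
    exact isClosed_eq (by fun_prop) (by fun_prop)
  · have hψgrad : ∫ x, inner ℝ (grad hψ.toL2Pair x) e * χ x = ∫ x, fderiv ℝ ψ x e * χ x :=
      integral_congr_ae (by
        filter_upwards [hψ.coeFn_grad] with x hx
        rw [hx, inner_gradient_left])
    have hψval : ∫ x, val hψ.toL2Pair x * fderiv ℝ χ x e = ∫ x, ψ x * fderiv ℝ χ x e :=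
      integral_congr_ae (by
        filter_upwards [hψ.coeFn_val] with x hx
        rw [hx])
    rw [hψgrad, hψval, hχ.integral_mul_fderiv_eq_neg isOpen_univ hψ.contDiff.contDiffOn, neg_neg]

end WeakMaximumPrinciple

section KernelAverages

open Filter Topology Metric ContinuousLinearMap
open scoped ContDiff Convolution

variable {E F : Type*} [NormedAddCommGroup E] [NormedAddCommGroup F] [NormedSpace ℝ F]

/-- The dilation `y ↦ s⁻ⁿ k(y / s)` of a kernel `k`, where `n` is the dimension of the space; it
preserves the integral. -/
def dilate [Module ℝ E] (k : E → F) (s : ℝ) (y : E) : F :=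
  s⁻¹ ^ Module.finrank ℝ E • k (s⁻¹ • y)

/-- The divergence `n k(y) + y · ∇k(y)` of the radial field `y ↦ k(y) y` in dimension `n`. -/
def radialDivergence [NormedSpace ℝ E] (k : E → F) (y : E) : F :=
  (Module.finrank ℝ E : ℝ) • k y + fderiv ℝ k y y

/-- A smooth kernel supported in the closed unit ball. -/
structure IsUnitKernel [NormedSpace ℝ E] (k : E → F) : Prop where
  contDiff : ContDiff ℝ ∞ k
  tsupport_subset : tsupport k ⊆ closedBall 0 1

/-- The average `x ↦ ∫ h(z) s⁻ⁿ k((x - z) / s) dz` of `h` at scale `s` against the kernel `k`. -/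
def kernelAverage [Module ℝ E] [MeasureSpace E] (k : E → F) (h : E → ℝ) (s : ℝ) : E → F :=
  h ⋆[lsmul ℝ ℝ] dilate k s

section Dilate

variable [NormedSpace ℝ E] {k : E → F} {s : ℝ}

theorem hasDerivAt_dilate (hk : Differentiable ℝ k) (hs : s ≠ 0) (y : E) :
    HasDerivAt (fun t ↦ dilate k t y) (-(s⁻¹ • dilate (radialDivergence k) s y)) s := by
  set n := Module.finrank ℝ E with hn
  have hpow : HasDerivAt (fun t : ℝ ↦ t⁻¹ ^ n) (-(s⁻¹ * (s⁻¹ ^ n * n))) s := by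
    refine ((hasDerivAt_inv hs).pow n).congr_deriv ?_
    cases n with
    | zero => simp
    | succ m => rw [Nat.add_sub_cancel, sq, mul_inv]; ring
  have hcomp := (hk (s⁻¹ • y)).hasFDerivAt.comp_hasDerivAt s
    ((hasDerivAt_inv hs).smul_const y)
  refine (hpow.smul hcomp).congr_deriv ?_
  have hsq : (s ^ 2)⁻¹ • y = s⁻¹ • s⁻¹ • y := by rw [smul_smul, ← mul_inv, sq]
  rw [dilate, radialDivergence, neg_smul, hsq, map_neg, map_smul, ← hn,
    Function.comp_apply]
  module

namespace IsUnitKernel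

theorem eq_zero (hk : IsUnitKernel k) {y : E} (hy : 1 < ‖y‖) : k y = 0 :=
  image_eq_zero_of_notMem_tsupport fun hmem ↦
    hy.not_ge (mem_closedBall_zero_iff.1 (hk.tsupport_subset hmem))

theorem dilate_eq_zero (hk : IsUnitKernel k) (hs : 0 < s) {y : E} (hy : s < ‖y‖) :
    dilate k s y = 0 := by
  rw [dilate, hk.eq_zero, smul_zero]
  rwa [norm_smul, norm_inv, norm_of_nonneg hs.le, inv_mul_eq_div, one_lt_div hs]

protected theorem fderiv (hk : IsUnitKernel k) : IsUnitKernel (fderiv ℝ k) where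
  contDiff := hk.contDiff.fderiv_right (by simp)
  tsupport_subset := (tsupport_fderiv_subset ℝ).trans hk.tsupport_subset

theorem contDiff_one (hk : IsUnitKernel k) : ContDiff ℝ 1 k :=
  hk.contDiff.of_le (mod_cast le_top)

theorem contDiff_dilate (hk : IsUnitKernel k) (s : ℝ) : ContDiff ℝ ∞ (dilate k s) :=
  (hk.contDiff.comp (contDiff_const_smul s⁻¹)).const_smul _

theorem contDiffOn_dilate (hk : IsUnitKernel k) :
    ContDiffOn ℝ ∞ (fun p : ℝ × E ↦ dilate k p.1 p.2) (Ioi 0 ×ˢ univ) := by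
  have hinv : ContDiffOn ℝ ∞ (fun p : ℝ × E ↦ p.1⁻¹) (Ioi 0 ×ˢ univ) :=
    contDiffOn_fst.inv fun p hp ↦ (mem_Ioi.1 hp.1).ne'
  exact (hinv.pow _).smul (hk.contDiff.comp_contDiffOn (hinv.smul contDiffOn_snd))

variable [FiniteDimensional ℝ E]

theorem hasCompactSupport (hk : IsUnitKernel k) : HasCompactSupport k :=
  .of_isClosed_subset (isCompact_closedBall 0 1) (isClosed_tsupport k) hk.tsupport_subset

theorem hasCompactSupport_dilate (hk : IsUnitKernel k) (hs : 0 < s) :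
    HasCompactSupport (dilate k s) :=
  .intro (isCompact_closedBall 0 s) fun _ hy ↦
    hk.dilate_eq_zero hs (not_le.1 (mt mem_closedBall_zero_iff.2 hy))

end IsUnitKernel

theorem fderiv_dilate (k : E → F) (s : ℝ) :
    fderiv ℝ (dilate k s) = s⁻¹ • dilate (fderiv ℝ k) s := by
  ext1 y
  change fderiv ℝ (s⁻¹ ^ Module.finrank ℝ E • fun y ↦ k (s⁻¹ • y)) y = _
  rw [fderiv_const_smul_field, Pi.smul_apply, fderiv_comp_smul, Pi.smul_apply, dilate, smul_comm]

theorem integral_dilate [FiniteDimensional ℝ E] [MeasureSpace E] [BorelSpace E]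
    [(volume : Measure E).IsAddHaarMeasure] (k : E → F) (hs : 0 < s) :
    ∫ y, dilate k s y = ∫ y, k y := by
  simp only [dilate]
  rw [integral_smul, Measure.integral_comp_inv_smul_of_nonneg _ _ hs.le, smul_smul, ← mul_pow,
    inv_mul_cancel₀ hs.ne', one_pow, one_smul]

end Dilate

section Average

variable [InnerProductSpace ℝ E] [FiniteDimensional ℝ E] [MeasurableSpace E] [BorelSpace E]
  {k : E → F} {h : E → ℝ} {s : ℝ}

theorem kernelAverage_apply (k : E → F) (h : E → ℝ) (s : ℝ) (x : E) :
    kernelAverage k h s x = ∫ z, h z • dilate k s (x - z) :=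
  rfl

theorem kernelAverage_smul (c : ℝ) (k : E → F) (h : E → ℝ) (s : ℝ) :
    kernelAverage (c • k) h s = c • kernelAverage k h s := by
  ext1 x
  rw [Pi.smul_apply, kernelAverage_apply, kernelAverage_apply, ← integral_smul]
  congr with z
  simp only [dilate, Pi.smul_apply, smul_comm c]

namespace IsUnitKernel

theorem integrable_smul_dilate (hk : IsUnitKernel k) (hh : LocallyIntegrable h) (hs : 0 < s)
    (x : E) : Integrable fun z ↦ h z • dilate k s (x - z) :=
  (hk.hasCompactSupport_dilate hs).convolutionExists_right (lsmul ℝ ℝ) hh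
    (hk.contDiff_dilate s).continuous x

theorem norm_kernelAverage_le (hk : IsUnitKernel k) {B : ℝ} (hB : ∀ᵐ z, |h z| ≤ B) (hs : 0 < s)
    (x : E) : ‖kernelAverage k h s x‖ ≤ B * ∫ y, ‖k y‖ := by
  have hnorm : (fun y ↦ ‖dilate k s y‖) = dilate (fun y ↦ ‖k y‖) s := by
    ext y
    rw [dilate, norm_smul, norm_of_nonneg (by positivity), dilate, smul_eq_mul]
  have hint : Integrable fun z ↦ ‖dilate k s (x - z)‖ :=
    (((hk.contDiff_dilate s).continuous.integrable_of_hasCompactSupport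
      (hk.hasCompactSupport_dilate hs)).comp_sub_left x).norm
  calc ‖kernelAverage k h s x‖ ≤ ∫ z, B * ‖dilate k s (x - z)‖ := by
        refine norm_integral_le_of_norm_le (hint.const_mul B) ?_
        filter_upwards [hB] with z hz
        rw [lsmul_apply, norm_smul]
        exact mul_le_mul_of_nonneg_right hz (norm_nonneg _)
    _ = B * ∫ y, ‖k y‖ := by
        rw [integral_const_mul, integral_sub_left_eq_self (fun y ↦ ‖dilate k s y‖), hnorm,
          integral_dilate _ hs]

theorem contDiff_kernelAverage (hk : IsUnitKernel k) (hh : LocallyIntegrable h) (hs : 0 < s) :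
    ContDiff ℝ ∞ (kernelAverage k h s) :=
  (hk.hasCompactSupport_dilate hs).contDiff_convolution_right _ hh (hk.contDiff_dilate s)

theorem hasFDerivAt_kernelAverage (hk : IsUnitKernel k) (hh : LocallyIntegrable h) (hs : 0 < s)
    (x : E) : HasFDerivAt (kernelAverage k h s) (s⁻¹ • kernelAverage (fderiv ℝ k) h s x) x := by
  have hderiv := (hk.hasCompactSupport_dilate hs).hasFDerivAt_convolution_right (lsmul ℝ ℝ) hh
    ((hk.contDiff_dilate s).of_le (mod_cast le_top)) x
  refine hderiv.congr_fderiv ?_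
  rw [kernelAverage_apply, ← integral_smul, fderiv_dilate]
  refine integral_congr_ae (.of_forall fun z ↦ ?_)
  ext e
  exact smul_comm _ _ _

theorem hasDerivAt_kernelAverage_scale (hk : IsUnitKernel k) (hh : LocallyIntegrable h)
    (hs : 0 < s) (x : E) :
    HasDerivAt (fun t ↦ kernelAverage k h t x)
      (-(s⁻¹ • kernelAverage (radialDivergence k) h s x)) s := by
  have hsmem : s ∈ Ioo 0 (2 * s) := ⟨hs, by linarith⟩
  have hvanish : ∀ t, ∀ y : E, t ∈ Ioo 0 (2 * s) → y ∉ closedBall 0 (2 * s) → dilate k t y = 0 :=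
    fun t y ht hy ↦ hk.dilate_eq_zero ht.1
      (ht.2.trans (not_le.1 (mt mem_closedBall_zero_iff.2 hy)))
  have hsmooth : ContDiffOn ℝ 1 (Function.HasUncurry.uncurry (dilate k))
      (Ioo 0 (2 * s) ×ˢ univ) :=
    (hk.contDiffOn_dilate.of_le (mod_cast le_top)).mono
      (prod_mono_left fun _ ht ↦ ht.1)
  have hopen : IsOpen (Ioo 0 (2 * s) ×ˢ (univ : Set E)) := isOpen_Ioo.prod isOpen_univ
  set D := fun y : E ↦ fderiv ℝ (Function.HasUncurry.uncurry (dilate k)) (s, y) with hD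
  have hDcont : Continuous D :=
    (hsmooth.continuousOn_fderiv_of_isOpen hopen le_rfl).comp_continuous (by fun_prop)
      fun y ↦ ⟨hsmem, mem_univ y⟩
  have hDapply : ∀ y, D y (1, 0) = -(s⁻¹ • dilate (radialDivergence k) s y) := fun y ↦
    (((hsmooth.differentiableOn one_ne_zero).differentiableAt
      (hopen.mem_nhds ⟨hsmem, mem_univ y⟩)).hasFDerivAt.comp_hasDerivAt s
      ((hasDerivAt_id s).prodMk (hasDerivAt_const s y))).unique
      (hasDerivAt_dilate (hk.contDiff_one.differentiable one_ne_zero) hs.ne' y)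
  have hDsupp : HasCompactSupport D := by
    refine .intro (isCompact_closedBall 0 (2 * s)) fun y hy ↦ ?_
    have hzero : Function.HasUncurry.uncurry (dilate k) =ᶠ[𝓝 (s, y)] 0 := by
      filter_upwards [(isOpen_Ioo.prod isClosed_closedBall.isOpen_compl).mem_nhds ⟨hsmem, hy⟩]
        with p hp
      exact hvanish p.1 p.2 hp.1 hp.2
    rw [hD]
    simp only [hzero.fderiv_eq, fderiv_zero, Pi.zero_apply]
  have hderiv := hasFDerivAt_convolution_right_with_param (lsmul ℝ ℝ) isOpen_Ioo
    (isCompact_closedBall 0 (2 * s)) hvanish hh hsmooth (s, x) hsmem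
  refine (hderiv.comp_hasDerivAt s ((hasDerivAt_id s).prodMk (hasDerivAt_const s x))).congr_deriv ?_
  rw [convolution_precompR_apply _ hh hDsupp hDcont, kernelAverage_apply, ← integral_smul,
    ← integral_neg]
  refine integral_congr_ae (.of_forall fun z ↦ ?_)
  simp only [lsmul_apply, hDapply, smul_neg, smul_comm s⁻¹]

theorem continuousOn_kernelAverage_scale (hk : IsUnitKernel k) (hh : LocallyIntegrable h) (x : E) :
    ContinuousOn (fun s ↦ kernelAverage k h s x) (Ioi 0) := fun _ hs ↦
  (hk.hasDerivAt_kernelAverage_scale hh hs x).continuousAt.continuousWithinAt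

theorem kernelAverage_congr_ae (hk : IsUnitKernel k) {h' : E → ℝ} (hs : 0 < s) {x : E}
    (hh : ∀ᵐ z, z ∈ closedBall x s → h z = h' z) :
    kernelAverage k h s x = kernelAverage k h' s x := by
  refine integral_congr_ae ?_
  filter_upwards [hh] with z hz
  by_cases hzx : z ∈ closedBall x s
  · rw [hz hzx]
  · rw [mem_closedBall', dist_eq_norm, not_le] at hzx
    rw [hk.dilate_eq_zero hs hzx, map_zero, map_zero]

theorem fderiv_kernelAverage_apply {k : E → ℝ} (hk : IsUnitKernel k) (hs : 0 < s)
    (hh : ContDiff ℝ 1 h) (hc : HasCompactSupport h) (x e : E) :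
    s⁻¹ * kernelAverage (fderiv ℝ k) h s x e =
      kernelAverage k (fun z ↦ fderiv ℝ h z e) s x := by
  have hkloc : LocallyIntegrable (dilate k s) := (hk.contDiff_dilate s).continuous.locallyIntegrable
  have hflip := hc.hasFDerivAt_convolution_right (lsmul ℝ ℝ).flip hkloc hh x
  rw [convolution_flip] at hflip
  have hunique := hflip.unique (hk.hasFDerivAt_kernelAverage hh.continuous.locallyIntegrable hs x)
  calc s⁻¹ * kernelAverage (fderiv ℝ k) h s x e = _ := (DFunLike.congr_fun hunique e).symm
    _ = _ := by
      rw [convolution_precompR_apply _ hkloc (hc.fderiv ℝ) (hh.continuous_fderiv one_ne_zero),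
        convolution_flip, kernelAverage]

end IsUnitKernel

end Average

end KernelAverages

section LocalPotentials

open Filter Topology Metric ContinuousLinearMap
open scoped ContDiff

variable {E F : Type*} [NormedAddCommGroup E] [InnerProductSpace ℝ E] [FiniteDimensional ℝ E]
  [MeasurableSpace E] [BorelSpace E] [NormedAddCommGroup F] [NormedSpace ℝ F]

theorem kernelAverage_nonneg {k : E → ℝ} (hk : ∀ y, 0 ≤ k y) {h : E → ℝ} (hh : ∀ᵐ z, 0 ≤ h z)
    {s : ℝ} (hs : 0 < s) (x : E) : 0 ≤ kernelAverage k h s x := by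
  refine integral_nonneg_of_ae ?_
  filter_upwards [hh] with z hz
  exact mul_nonneg hz (mul_nonneg (by positivity) (hk _))

/-- The superposition `x ↦ ∫₀ʳ s (kernelAverage k h s x) ds` of the averages of `h` at the scales
below `r`. For a suitable kernel `k` it is a local substitute for the Newtonian potential of `h`:
see `IsWeakSolution.preciseRep_val_eq`. -/
def localPotential (k h : E → ℝ) (r : ℝ) (x : E) : ℝ :=
  ∫ s in 0..r, s * kernelAverage k h s x

theorem localPotential_nonneg {k : E → ℝ} (hk : ∀ y, 0 ≤ k y) {h : E → ℝ} (hh : ∀ᵐ z, 0 ≤ h z)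
    {r : ℝ} (hr : 0 ≤ r) (x : E) : 0 ≤ localPotential k h r x := by
  rw [localPotential, intervalIntegral.integral_of_le hr]
  exact setIntegral_nonneg measurableSet_Ioc fun s hs ↦
    mul_nonneg hs.1.le (kernelAverage_nonneg hk hh hs.1 x)

namespace IsUnitKernel

variable {k : E → F} {h : E → ℝ} {B r : ℝ}

theorem ae_tendsto_kernelAverage {k : E → ℝ} (hk : IsUnitKernel k) (hk1 : ∫ y, k y = 1)
    (hh : LocallyIntegrable h) :
    ∀ᵐ x, Tendsto (fun s ↦ kernelAverage k h s x) (𝓝[>] 0) (𝓝 (h x)) := by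
  obtain ⟨M, hM⟩ := hk.hasCompactSupport.exists_bound_of_continuous hk.contDiff.continuous
  filter_upwards [(Besicovitch.vitaliFamily volume).ae_tendsto_average_norm_sub hh] with x hx
  have hpos : ∀ᶠ s : ℝ in 𝓝[>] 0, 0 < s := self_mem_nhdsWithin
  simp only [kernelAverage_apply, smul_eq_mul, mul_comm (h _)]
  refine tendsto_integral_smul_of_tendsto_average_norm_sub (M * volume.real (ball (0 : E) 1))
    (hx.comp (Besicovitch.tendsto_filterAt volume x)) ?_ ?_ ?_ ?_
  · exact .of_forall fun s ↦ hh.integrableOn_isCompact (isCompact_closedBall _ _)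
  · refine tendsto_const_nhds.congr' ?_
    filter_upwards [hpos] with s hs
    rw [integral_sub_left_eq_self (dilate k s), integral_dilate k hs, hk1]
  · filter_upwards [hpos] with s hs z hz
    rw [mem_closedBall', dist_eq_norm]
    exact not_lt.1 fun hsz ↦ hz (hk.dilate_eq_zero hs hsz)
  · filter_upwards [hpos] with s hs z
    have hball : 0 < volume.real (ball (0 : E) 1) :=
      ENNReal.toReal_pos (measure_ball_pos volume 0 one_pos).ne' measure_ball_lt_top.ne
    rw [Measure.addHaar_real_closedBall _ _ hs.le, mul_div_mul_right _ _ hball.ne', dilate,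
      smul_eq_mul, abs_mul, abs_of_pos (by positivity), inv_pow, div_eq_inv_mul]
    exact mul_le_mul_of_nonneg_left (hM _) (by positivity)

theorem aestronglyMeasurable_kernelAverage_scale (hk : IsUnitKernel k) (hh : LocallyIntegrable h)
    (hr : 0 ≤ r) (x : E) :
    AEStronglyMeasurable (fun s ↦ kernelAverage k h s x) (volume.restrict (uIoc 0 r)) :=
  ((hk.continuousOn_kernelAverage_scale hh x).mono
    fun _ hs ↦ (uIoc_of_le hr ▸ hs).1).aestronglyMeasurable measurableSet_uIoc

theorem intervalIntegrable_kernelAverage_scale (hk : IsUnitKernel k) (hh : LocallyIntegrable h)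
    (hB : ∀ᵐ z, |h z| ≤ B) (hr : 0 ≤ r) (x : E) :
    IntervalIntegrable (fun s ↦ kernelAverage k h s x) volume 0 r := by
  refine (intervalIntegrable_const (c := B * ∫ y, ‖k y‖)).mono_fun'
    (hk.aestronglyMeasurable_kernelAverage_scale hh hr x) ?_
  refine (ae_restrict_mem measurableSet_uIoc).mono fun s hs ↦ ?_
  exact hk.norm_kernelAverage_le hB (uIoc_of_le hr ▸ hs).1 x

theorem continuous_integral_kernelAverage (hk : IsUnitKernel k) (hh : LocallyIntegrable h)
    (hB : ∀ᵐ z, |h z| ≤ B) (hr : 0 ≤ r) :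
    Continuous fun x ↦ ∫ s in 0..r, kernelAverage k h s x := by
  refine intervalIntegral.continuous_of_dominated_interval
    (fun x ↦ hk.aestronglyMeasurable_kernelAverage_scale hh hr x) (fun x ↦ .of_forall fun s hs ↦ ?_)
    (intervalIntegrable_const (c := B * ∫ y, ‖k y‖)) (.of_forall fun s hs ↦ ?_)
  · exact hk.norm_kernelAverage_le hB (uIoc_of_le hr ▸ hs).1 x
  · exact (hk.contDiff_kernelAverage hh (uIoc_of_le hr ▸ hs).1).continuous

variable {k : E → ℝ}

theorem hasFDerivAt_localPotential (hk : IsUnitKernel k) (hh : LocallyIntegrable h)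
    (hB : ∀ᵐ z, |h z| ≤ B) (hr : 0 ≤ r) (x : E) :
    HasFDerivAt (localPotential k h r) (∫ s in 0..r, kernelAverage (fderiv ℝ k) h s x) x := by
  refine intervalIntegral.hasFDerivAt_integral_of_dominated_of_fderiv_le
    (F := fun y s ↦ s * kernelAverage k h s y)
    (F' := fun y s ↦ kernelAverage (fderiv ℝ k) h s y) univ_mem
    (.of_forall fun y ↦ ?_) ?_ (hk.fderiv.aestronglyMeasurable_kernelAverage_scale hh hr x)
    (.of_forall fun s hs y _ ↦ ?_) (intervalIntegrable_const (c := B * ∫ y, ‖fderiv ℝ k y‖))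
    (.of_forall fun s hs y _ ↦ ?_)
  · exact continuous_id.aestronglyMeasurable.mul
      (hk.aestronglyMeasurable_kernelAverage_scale hh hr y)
  · exact (hk.intervalIntegrable_kernelAverage_scale hh hB hr x).continuousOn_mul continuousOn_id
  · exact hk.fderiv.norm_kernelAverage_le hB (uIoc_of_le hr ▸ hs).1 y
  · have hs0 : 0 < s := (uIoc_of_le hr ▸ hs).1
    refine ((hk.hasFDerivAt_kernelAverage hh hs0 y).const_mul s).congr_fderiv ?_
    rw [smul_smul, mul_inv_cancel₀ hs0.ne', one_smul]

theorem contDiff_one_localPotential (hk : IsUnitKernel k) (hh : LocallyIntegrable h)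
    (hB : ∀ᵐ z, |h z| ≤ B) (hr : 0 ≤ r) : ContDiff ℝ 1 (localPotential k h r) :=
  contDiff_one_iff_hasFDerivAt.2 ⟨_, hk.fderiv.continuous_integral_kernelAverage hh hB hr,
    hk.hasFDerivAt_localPotential hh hB hr⟩

theorem fderiv_localPotential_apply (hk : IsUnitKernel k) (hh : ContDiff ℝ 1 h)
    (hc : HasCompactSupport h) (hr : 0 ≤ r) (x e : E) :
    fderiv ℝ (localPotential k h r) x e = localPotential k (fun z ↦ fderiv ℝ h z e) r x := by
  obtain ⟨B, hB⟩ := hc.exists_bound_of_continuous hh.continuous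
  have hloc := hh.continuous.locallyIntegrable (μ := (volume : Measure E))
  rw [(hk.hasFDerivAt_localPotential hloc (.of_forall hB) hr x).fderiv, localPotential,
    intervalIntegral_apply
      (hk.fderiv.intervalIntegrable_kernelAverage_scale hloc (.of_forall hB) hr x)]
  refine intervalIntegral.integral_congr_ae (.of_forall fun s hs ↦ ?_)
  have hs0 : 0 < s := (uIoc_of_le hr ▸ hs).1
  rw [← hk.fderiv_kernelAverage_apply hs0 hh hc, mul_inv_cancel_left₀ hs0.ne']

theorem contDiff_two_localPotential (hk : IsUnitKernel k) (hh : ContDiff ℝ 1 h)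
    (hc : HasCompactSupport h) (hr : 0 ≤ r) : ContDiff ℝ 2 (localPotential k h r) := by
  obtain ⟨B, hB⟩ := hc.exists_bound_of_continuous hh.continuous
  rw [show (2 : ℕ∞ω) = 1 + 1 from rfl, contDiff_succ_iff_fderiv_apply]
  refine ⟨(hk.contDiff_one_localPotential hh.continuous.locallyIntegrable (.of_forall hB)
    hr).differentiable one_ne_zero, by simp, fun e ↦ ?_⟩
  have hcont : Continuous fun z ↦ fderiv ℝ h z e :=
    (hh.continuous_fderiv one_ne_zero).clm_apply continuous_const
  obtain ⟨B', hB'⟩ := (hc.fderiv_apply ℝ e).exists_bound_of_continuous hcont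
  simp only [hk.fderiv_localPotential_apply hh hc hr]
  exact hk.contDiff_one_localPotential hcont.locallyIntegrable (.of_forall hB') hr

theorem localPotential_congr_ae (hk : IsUnitKernel k) {h' : E → ℝ} (hr : 0 ≤ r) {x : E}
    (hh : ∀ᵐ z, z ∈ closedBall x r → h z = h' z) :
    localPotential k h r x = localPotential k h' r x := by
  refine intervalIntegral.integral_congr_ae (.of_forall fun s hs ↦ ?_)
  rw [uIoc_of_le hr] at hs
  rw [hk.kernelAverage_congr_ae hs.1]
  filter_upwards [hh] with z hz hzs using hz (closedBall_subset_closedBall hs.2 hzs)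

end IsUnitKernel

end LocalPotentials

section MollifierKernels

open Filter Topology Metric
open scoped ContDiff

/-- The primitive of the smooth function `expNegInvGlue` which vanishes on the negative half-line;
it is used to solve `∇K(y) = -k(y) y` for a radial kernel `k`. -/
def expNegInvGluePrimitive (t : ℝ) : ℝ := ∫ a in 0..t, expNegInvGlue a

namespace expNegInvGluePrimitive

theorem hasDerivAt (t : ℝ) : HasDerivAt expNegInvGluePrimitive (expNegInvGlue t) t :=
  (expNegInvGlue.contDiff (n := 0).continuous.integral_hasStrictDerivAt 0 t).hasDerivAt

theorem contDiff : ContDiff ℝ ∞ expNegInvGluePrimitive := by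
  rw [contDiff_infty_iff_deriv, funext fun t ↦ (hasDerivAt t).deriv]
  exact ⟨fun t ↦ (hasDerivAt t).differentiableAt, expNegInvGlue.contDiff⟩

theorem zero_of_nonpos {t : ℝ} (ht : t ≤ 0) : expNegInvGluePrimitive t = 0 :=
  intervalIntegral.integral_zero_ae <| .of_forall fun _ ha ↦
    expNegInvGlue.zero_of_nonpos (uIoc_of_ge ht ▸ ha).2

theorem nonneg (t : ℝ) : 0 ≤ expNegInvGluePrimitive t := by
  rcases le_total t 0 with ht | ht
  · rw [zero_of_nonpos ht]
  · exact intervalIntegral.integral_nonneg ht fun a _ ↦ expNegInvGlue.nonneg a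

end expNegInvGluePrimitive

variable {E : Type*} [NormedAddCommGroup E] [InnerProductSpace ℝ E]

theorem isUnitKernel_comp_one_sub_norm_sq {G : ℝ → ℝ} (hG : ContDiff ℝ ∞ G)
    (hG0 : ∀ t ≤ 0, G t = 0) : IsUnitKernel fun y : E ↦ G (1 - ‖y‖ ^ 2) where
  contDiff := hG.comp (contDiff_const.sub (contDiff_norm_sq ℝ))
  tsupport_subset := by
    refine closure_minimal (Function.support_subset_iff'.2 fun y hy ↦ hG0 _ ?_) isClosed_closedBall
    rw [mem_closedBall_zero_iff, not_le] at hy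
    nlinarith

variable [FiniteDimensional ℝ E] [MeasurableSpace E] [BorelSpace E]

/-- The radial mollifier: the normalisation of `exp (-1 / (1 - ‖y‖²))` in the unit ball. -/
def mollifier (y : E) : ℝ :=
  (∫ z : E, expNegInvGlue (1 - ‖z‖ ^ 2))⁻¹ * expNegInvGlue (1 - ‖y‖ ^ 2)

/-- The kernel `K` supported in the unit ball with `∇K(y) = -mollifier(y) y`; its Laplacian is the
opposite of the radial divergence of the mollifier. -/
def potentialKernel (y : E) : ℝ :=
  (2 * ∫ z : E, expNegInvGlue (1 - ‖z‖ ^ 2))⁻¹ * expNegInvGluePrimitive (1 - ‖y‖ ^ 2)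

theorem integral_expNegInvGlue_one_sub_norm_sq_pos :
    0 < ∫ z : E, expNegInvGlue (1 - ‖z‖ ^ 2) := by
  have hker := isUnitKernel_comp_one_sub_norm_sq (E := E) expNegInvGlue.contDiff
    fun _ ↦ expNegInvGlue.zero_of_nonpos
  refine hker.contDiff.continuous.integral_pos_of_hasCompactSupport_nonneg_nonzero
    hker.hasCompactSupport (fun _ ↦ expNegInvGlue.nonneg _) (x := 0) ?_
  exact (expNegInvGlue.pos_of_pos (by simp)).ne'

theorem isUnitKernel_mollifier : IsUnitKernel (mollifier : E → ℝ) :=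
  isUnitKernel_comp_one_sub_norm_sq (contDiff_const.mul expNegInvGlue.contDiff) fun _ ht ↦ by
    rw [expNegInvGlue.zero_of_nonpos ht, mul_zero]

theorem integral_mollifier : ∫ y : E, mollifier y = 1 := by
  simp only [mollifier, integral_const_mul]
  exact inv_mul_cancel₀ integral_expNegInvGlue_one_sub_norm_sq_pos.ne'

theorem mollifier_nonneg (y : E) : 0 ≤ mollifier y :=
  mul_nonneg (inv_pos.2 integral_expNegInvGlue_one_sub_norm_sq_pos).le (expNegInvGlue.nonneg _)

theorem mollifier_pos {y : E} (hy : ‖y‖ < 1) : 0 < mollifier y :=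
  mul_pos (inv_pos.2 integral_expNegInvGlue_one_sub_norm_sq_pos)
    (expNegInvGlue.pos_of_pos (by nlinarith [norm_nonneg y]))

theorem isUnitKernel_potentialKernel : IsUnitKernel (potentialKernel : E → ℝ) :=
  isUnitKernel_comp_one_sub_norm_sq (contDiff_const.mul expNegInvGluePrimitive.contDiff)
    fun _ ht ↦ by rw [expNegInvGluePrimitive.zero_of_nonpos ht, mul_zero]

theorem potentialKernel_nonneg (y : E) : 0 ≤ potentialKernel y :=
  mul_nonneg (inv_pos.2 (mul_pos two_pos integral_expNegInvGlue_one_sub_norm_sq_pos)).le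
    (expNegInvGluePrimitive.nonneg _)

theorem hasFDerivAt_potentialKernel (y : E) :
    HasFDerivAt potentialKernel (-(mollifier y • innerSL ℝ y)) y := by
  have hsq : HasFDerivAt (fun y : E ↦ 1 - ‖y‖ ^ 2) (-(2 • innerSL ℝ y)) y :=
    (hasStrictFDerivAt_norm_sq y).hasFDerivAt.const_sub 1
  refine (((expNegInvGluePrimitive.hasDerivAt _).comp_hasFDerivAt y hsq).const_mul
    (2 * ∫ z : E, expNegInvGlue (1 - ‖z‖ ^ 2))⁻¹).congr_fderiv ?_
  rw [mollifier, mul_inv]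
  module

/-- The pointwise limit of the mollifications of `V`, a representative of `V` independent of the
choice of `V` in its almost everywhere class; junk where the limit does not exist. -/
def preciseRep (V : E → ℝ) (x : E) : ℝ :=
  limUnder (𝓝[>] 0) fun s ↦ kernelAverage mollifier V s x

theorem preciseRep_ae_eq {V : E → ℝ} (hV : LocallyIntegrable V) : preciseRep V =ᵐ[volume] V := by
  filter_upwards [isUnitKernel_mollifier.ae_tendsto_kernelAverage integral_mollifier hV] with x hx
    using hx.limUnder_eq

end MollifierKernels

section MeanValueFormula

open Filter Topology Metric L2Pair
open scoped ContDiff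

variable {N : ℕ}

theorem sum_inner_single_mul_apply (L : EuclideanSpace ℝ (Fin N) →L[ℝ] ℝ)
    (a : EuclideanSpace ℝ (Fin N)) :
    ∑ i, inner ℝ a (EuclideanSpace.single i (1 : ℝ)) * L (EuclideanSpace.single i 1) = L a := by
  conv_rhs => rw [← (EuclideanSpace.basisFun (Fin N) ℝ).sum_repr' a]
  simp only [map_sum, map_smul, smul_eq_mul, EuclideanSpace.basisFun_apply, real_inner_comm]

theorem lapl_comp_const_sub (w : EuclideanSpace ℝ (Fin N) → ℝ) (x z : EuclideanSpace ℝ (Fin N)) :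
    lapl (fun z ↦ w (x - z)) z = lapl w (x - z) := by
  have hfderiv (w : EuclideanSpace ℝ (Fin N) → ℝ) (z : EuclideanSpace ℝ (Fin N)) :
      fderiv ℝ (fun z ↦ w (x - z)) z = -fderiv ℝ w (x - z) := by
    simpa only [neg_one_smul, ← sub_eq_add_neg, fderiv_comp_add_left] using
      fderiv_comp_smul (𝕜 := ℝ) (f := fun y ↦ w (x + y)) (x := z) (-1 : ℝ)
  simp only [lapl, hfderiv, neg_apply, fderiv_fun_neg]
  refine Finset.sum_congr rfl fun i _ ↦ ?_
  rw [hfderiv fun y ↦ fderiv ℝ w y (EuclideanSpace.single i 1), neg_apply, neg_neg]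

theorem lapl_dilate (k : EuclideanSpace ℝ (Fin N) → ℝ) (s : ℝ) (y : EuclideanSpace ℝ (Fin N)) :
    lapl (dilate k s) y = s⁻¹ ^ 2 * dilate (lapl k) s y := by
  have hfderiv (k : EuclideanSpace ℝ (Fin N) → ℝ) (e : EuclideanSpace ℝ (Fin N)) :
      (fun y ↦ fderiv ℝ (dilate k s) y e) = s⁻¹ • dilate (fun y ↦ fderiv ℝ k y e) s := by
    ext y
    rw [fderiv_dilate]
    simp only [Pi.smul_apply, smul_apply, dilate]
  rw [dilate, smul_eq_mul, lapl, lapl, Finset.mul_sum, Finset.mul_sum]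
  refine Finset.sum_congr rfl fun i _ ↦ ?_
  rw [hfderiv, fderiv_const_smul_field, fderiv_dilate]
  simp only [dilate, Pi.smul_apply, smul_apply, smul_eq_mul]
  ring

theorem lapl_potentialKernel (y : EuclideanSpace ℝ (Fin N)) :
    lapl potentialKernel y = -radialDivergence mollifier y := by
  have hfst (y e : EuclideanSpace ℝ (Fin N)) :
      fderiv ℝ potentialKernel y e = -(mollifier y * inner ℝ y e) := by
    rw [(hasFDerivAt_potentialKernel y).fderiv]
    rfl
  have hsnd (e : EuclideanSpace ℝ (Fin N)) : fderiv ℝ (fun y ↦ fderiv ℝ potentialKernel y e) y e =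
      -(mollifier y * inner ℝ e e + inner ℝ y e * fderiv ℝ mollifier y e) := by
    have hmollifier :=
      (isUnitKernel_mollifier.contDiff_one.differentiable one_ne_zero y).hasFDerivAt
    have hproduct : HasFDerivAt (fun y ↦ -(mollifier y * inner ℝ y e)) _ y :=
      (hmollifier.mul ((hasFDerivAt_id y).inner ℝ (hasFDerivAt_const e y))).neg
    simp only [hfst]
    rw [hproduct.fderiv]
    simp
  simp only [lapl, hsnd, Finset.sum_neg_distrib, Finset.sum_add_distrib, sum_inner_single_mul_apply]
  simp [radialDivergence]

variable {Ω : Set (EuclideanSpace ℝ (Fin N))} {v : L2Pair (EuclideanSpace ℝ (Fin N))}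
  {H : Lp ℝ 2 (volume : Measure (EuclideanSpace ℝ (Fin N)))} {B r s : ℝ}
  {x : EuclideanSpace ℝ (Fin N)}

theorem IsWeakSolution.integral_val_mul_lapl (hv : IsWeakSolution Ω v H)
    {χ : EuclideanSpace ℝ (Fin N) → ℝ} (hχ : IsC1Test Ω χ) (hχ2 : ContDiff ℝ 2 χ) :
    ∫ y, val v y * lapl χ y = -∫ y, H y * χ y := by
  have hpartial (e : EuclideanSpace ℝ (Fin N)) : IsC1Test univ fun y ↦ fderiv ℝ χ y e :=
    ⟨(hχ2.fderiv_right le_rfl).clm_apply contDiff_const, hχ.hasCompactSupport.fderiv_apply ℝ e,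
      subset_univ _⟩
  have hrhs : inner ℝ H (val hχ.toL2Pair) = ∫ y, H y * χ y := by
    rw [L2.inner_def]
    refine integral_congr_ae ?_
    filter_upwards [hχ.coeFn_val] with y hy
    rw [hy, RCLike.inner_apply, conj_trivial, mul_comm]
  have hlhs : inner ℝ (grad v) (grad hχ.toL2Pair) = ∑ i, ∫ y,
      inner ℝ (grad v y) (EuclideanSpace.single i (1 : ℝ)) *
        fderiv ℝ χ y (EuclideanSpace.single i 1) := by
    rw [L2.inner_def, ← integral_finsetSum]
    · refine integral_congr_ae ?_
      filter_upwards [hχ.coeFn_grad] with y hy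
      rw [hy, sum_inner_single_mul_apply, inner_gradient_right, conj_trivial]
    · exact fun i _ ↦ ((Lp.memLp (grad v)).inner_const _).integrable_mul
        (hpartial (EuclideanSpace.single i 1)).memLp
  have hlapl : ∫ y, val v y * lapl χ y = ∑ i, ∫ y, val v y *
      fderiv ℝ (fun y ↦ fderiv ℝ χ y (EuclideanSpace.single i 1)) y
        (EuclideanSpace.single i 1) := by
    rw [← integral_finsetSum]
    · simp only [lapl, Finset.mul_sum]
    · exact fun i _ ↦ (Lp.memLp (val v)).integrable_mul
        ((((hpartial _).contDiff.continuous_fderiv one_ne_zero).clm_apply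
          continuous_const).memLp_of_hasCompactSupport (p := 2)
            ((hpartial _).hasCompactSupport.fderiv_apply ℝ _))
  rw [← hrhs, ← hv.2 _ hχ.toL2Pair_mem_H10, hlhs, hlapl, ← Finset.sum_neg_distrib]
  exact Finset.sum_congr rfl fun i _ ↦ by
    rw [H10.integral_inner_grad_mul_eq_neg (hpartial _) _ v hv.1, neg_neg]

theorem IsWeakSolution.kernelAverage_lapl (hv : IsWeakSolution Ω v H)
    {k : EuclideanSpace ℝ (Fin N) → ℝ} (hk : IsUnitKernel k) (hs : 0 < s)
    (hx : closedBall x s ⊆ Ω) :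
    kernelAverage (lapl k) (val v) s x = -(s ^ 2 * kernelAverage k H s x) := by
  have hsmooth : ContDiff ℝ ∞ fun z ↦ dilate k s (x - z) :=
    (hk.contDiff_dilate s).comp (contDiff_const.sub contDiff_id)
  have hvanish (z) (hz : z ∉ closedBall x s) : dilate k s (x - z) = 0 :=
    hk.dilate_eq_zero hs (by rwa [mem_closedBall', dist_eq_norm, not_le] at hz)
  have htest : IsC1Test Ω fun z ↦ dilate k s (x - z) :=
    ⟨hsmooth.of_le (mod_cast le_top), .intro (isCompact_closedBall x s) hvanish,
      (closure_minimal (Function.support_subset_iff'.2 hvanish) isClosed_closedBall).trans hx⟩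
  have hweak := hv.integral_val_mul_lapl htest (mod_cast contDiff_infty.1 hsmooth 2)
  simp only [lapl_comp_const_sub, lapl_dilate, mul_left_comm _ (s⁻¹ ^ 2), integral_const_mul]
    at hweak
  rw [kernelAverage_apply, kernelAverage_apply]
  simp only [smul_eq_mul]
  rw [← mul_neg, ← hweak, inv_pow, mul_inv_cancel_left₀ (by positivity)]

theorem IsWeakSolution.hasDerivAt_mollifierAverage (hv : IsWeakSolution Ω v H)
    (hs : 0 < s) (hx : closedBall x s ⊆ Ω) :
    HasDerivAt (fun s ↦ kernelAverage mollifier (val v) s x)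
      (-(s * kernelAverage potentialKernel H s x)) s := by
  refine (isUnitKernel_mollifier.hasDerivAt_kernelAverage_scale
    ((Lp.memLp (val v)).locallyIntegrable one_le_two) hs x).congr_deriv ?_
  have hkernel : radialDivergence mollifier =
      (-1 : ℝ) • lapl (potentialKernel : EuclideanSpace ℝ (Fin N) → ℝ) := by
    ext y
    simp [lapl_potentialKernel]
  rw [hkernel, kernelAverage_smul, Pi.smul_apply,
    hv.kernelAverage_lapl isUnitKernel_potentialKernel hs hx, smul_eq_mul, smul_eq_mul]
  field_simp

theorem IsWeakSolution.tendsto_mollifierAverage (hv : IsWeakSolution Ω v H)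
    (hB : ∀ᵐ z, |H z| ≤ B) (hr : 0 < r) (hx : closedBall x r ⊆ Ω) :
    Tendsto (fun s ↦ kernelAverage mollifier (val v) s x) (𝓝[>] 0)
      (𝓝 (kernelAverage mollifier (val v) r x + localPotential potentialKernel H r x)) := by
  have hint : IntervalIntegrable (fun s ↦ s * kernelAverage potentialKernel H s x) volume 0 r :=
    (isUnitKernel_potentialKernel.intervalIntegrable_kernelAverage_scale
      ((Lp.memLp H).locallyIntegrable one_le_two) hB hr.le x).continuousOn_mul continuousOn_id
  have hprimitive : Tendsto (fun s ↦ ∫ t in s..r, t * kernelAverage potentialKernel H t x)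
      (𝓝[>] 0) (𝓝 (localPotential potentialKernel H r x)) := by
    have hcont := intervalIntegral.continuousOn_primitive_interval_left
      ((intervalIntegrable_iff' enorm_ne_top).1 hint) 0 left_mem_uIcc
    rw [uIcc_of_le hr.le] at hcont
    exact hcont.mono_left ((nhdsWithin_Ioc_eq_nhdsGT hr).ge.trans
      (nhdsWithin_mono 0 Ioc_subset_Icc_self))
  refine (tendsto_const_nhds.add hprimitive).congr' ?_
  filter_upwards [Ioc_mem_nhdsGT hr] with s hs
  have hderiv (t) (ht : t ∈ uIcc s r) : HasDerivAt (fun s ↦ -kernelAverage mollifier (val v) s x)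
      (t * kernelAverage potentialKernel H t x) t := by
    rw [uIcc_of_le hs.2] at ht
    exact (hv.hasDerivAt_mollifierAverage (hs.1.trans_le ht.1)
      ((closedBall_subset_closedBall ht.2).trans hx)).neg.congr_deriv (neg_neg _)
  rw [intervalIntegral.integral_eq_sub_of_hasDerivAt hderiv
    (hint.mono_set (uIcc_subset_uIcc (mem_uIcc_of_le hs.1.le hs.2) right_mem_uIcc))]
  ring

theorem IsWeakSolution.preciseRep_val_eq (hv : IsWeakSolution Ω v H)
    (hB : ∀ᵐ z, |H z| ≤ B) (hr : 0 < r) (hx : closedBall x r ⊆ Ω) :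
    preciseRep (val v) x =
      kernelAverage mollifier (val v) r x + localPotential potentialKernel H r x :=
  (hv.tendsto_mollifierAverage hB hr hx).limUnder_eq

end MeanValueFormula

section Regularity

open Filter Topology Metric L2Pair
open scoped ContDiff

section Identification

variable {E : Type*} [NormedAddCommGroup E] [InnerProductSpace ℝ E] [FiniteDimensional ℝ E]
  [MeasurableSpace E] [BorelSpace E] {Ω : Set E}

theorem ae_eq_of_forall_integral_mul_isC1Test {μ : Measure E} (hΩ : IsOpen Ω) {a b : E → ℝ}
    (ha : LocallyIntegrableOn a Ω μ) (hb : LocallyIntegrableOn b Ω μ)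
    (h : ∀ ψ, IsC1Test Ω ψ → ∫ x, a x * ψ x ∂μ = ∫ x, b x * ψ x ∂μ) :
    ∀ᵐ x ∂μ, x ∈ Ω → a x = b x := by
  have hzero := hΩ.ae_eq_zero_of_integral_contDiff_smul_eq_zero (ha.sub hb) fun ψ hψ hc hsupp ↦ ?_
  · filter_upwards [hzero] with x hx hxΩ using sub_eq_zero.1 (hx hxΩ)
  have hint {w : E → ℝ} (hw : LocallyIntegrableOn w Ω μ) : Integrable (fun x ↦ w x * ψ x) μ :=
    (integrableOn_iff_integrable_of_support_subset
      ((Function.support_mul_subset_right w ψ).trans (subset_tsupport ψ))).1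
        ((hw.integrableOn_compact_subset hsupp hc).mul_continuousOn
          hψ.continuous.continuousOn hc)
  simp only [Pi.sub_apply, smul_eq_mul, mul_comm (ψ _), sub_mul]
  rw [integral_sub (hint ha) (hint hb), h ψ ⟨hψ.of_le (mod_cast le_top), hc, hsupp⟩, sub_self]

theorem H10.grad_ae_eq_gradient (hΩ : IsOpen Ω) {u : L2Pair E} (hu : u ∈ H10 Ω) {w : E → ℝ}
    (hw : ContDiffOn ℝ 1 w Ω) (huw : ∀ᵐ x, x ∈ Ω → val u x = w x) :
    ∀ᵐ x, x ∈ Ω → grad u x = gradient w x := by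
  have hpartial (e : E) : ∀ᵐ x, x ∈ Ω → inner ℝ (grad u x) e = fderiv ℝ w x e := by
    refine ae_eq_of_forall_integral_mul_isC1Test hΩ
      ((((Lp.memLp (grad u)).inner_const e).locallyIntegrable one_le_two).locallyIntegrableOn Ω)
      (((hw.continuousOn_fderiv_of_isOpen hΩ le_rfl).clm_apply
        continuousOn_const).locallyIntegrableOn hΩ.measurableSet) fun ψ hψ ↦ ?_
    have hψ_univ : IsC1Test univ ψ := ⟨hψ.contDiff, hψ.hasCompactSupport, subset_univ _⟩
    rw [H10.integral_inner_grad_mul_eq_neg hψ_univ e u hu,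
      ← neg_eq_iff_eq_neg.2 (hψ.integral_mul_fderiv_eq_neg hΩ hw e)]
    congr 1
    refine integral_congr_ae ?_
    filter_upwards [huw] with x hx
    by_cases hxΩ : x ∈ Ω
    · rw [hx hxΩ]
    · rw [image_eq_zero_of_notMem_tsupport (f := (fderiv ℝ ψ · e)) fun hmem ↦
        hxΩ (hψ.tsupport_subset (tsupport_fderiv_apply_subset ℝ e hmem)), mul_zero, mul_zero]
  let b := stdOrthonormalBasis ℝ E
  filter_upwards [ae_all_iff.2 fun i ↦ hpartial (b i)] with x hx hxΩ
  refine InnerProductSpace.ext_inner_right_basis b.toBasis fun i ↦ ?_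
  rw [b.coe_toBasis, hx i hxΩ, inner_gradient_left]

end Identification

variable {N : ℕ} {Ω : Set (EuclideanSpace ℝ (Fin N))} {v : L2Pair (EuclideanSpace ℝ (Fin N))}
  {H : Lp ℝ 2 (volume : Measure (EuclideanSpace ℝ (Fin N)))} {B r : ℝ}
  {w h : EuclideanSpace ℝ (Fin N) → ℝ} {x : EuclideanSpace ℝ (Fin N)}

theorem gradNorm2_eq_norm_grad (hΩ : IsOpen Ω) (hv : v ∈ H10 Ω) (hw : ContDiffOn ℝ 1 w Ω)
    (hvw : ∀ᵐ x, x ∈ Ω → val v x = w x) : gradNorm2 Ω w = ‖grad v‖ := by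
  rw [gradNorm2, Lp.norm_def, ← eLpNorm_indicator_eq_eLpNorm_restrict hΩ.measurableSet]
  refine congrArg ENNReal.toReal (eLpNorm_congr_ae ?_)
  filter_upwards [H10.grad_ae_eq_zero hΩ.measurableSet v hv, H10.grad_ae_eq_gradient hΩ hv hw hvw]
    with x hout hin
  by_cases hx : x ∈ Ω
  · rw [indicator_of_mem hx, hin hx]
  · rw [indicator_of_notMem hx, hout hx]

theorem continuousOn_lapl (hΩ : IsOpen Ω) (hw : ContDiffOn ℝ 2 w Ω) : ContinuousOn (lapl w) Ω :=
  continuousOn_finsetSum _ fun i _ ↦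
    ((((hw.fderiv_of_isOpen hΩ (m := 1) (by norm_num)).clm_apply
      contDiffOn_const).continuousOn_fderiv_of_isOpen hΩ le_rfl).clm_apply continuousOn_const)

namespace IsWeakSolution

theorem neg_lapl_eq (hv : IsWeakSolution Ω v H) (hΩ : IsOpen Ω) (hw : ContDiffOn ℝ 2 w Ω)
    (hvw : ∀ᵐ x, x ∈ Ω → val v x = w x) (hh : ContinuousOn h Ω)
    (hHh : ∀ᵐ x, x ∈ Ω → H x = h x) : ∀ x ∈ Ω, -lapl w x = h x := by
  have hlapl := (continuousOn_lapl hΩ hw).neg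
  refine Measure.eqOn_open_of_ae_eq (μ := volume) ?_ hΩ hlapl hh
  refine (ae_restrict_iff' hΩ.measurableSet).2 (ae_eq_of_forall_integral_mul_isC1Test hΩ
    (hlapl.locallyIntegrableOn hΩ.measurableSet) (hh.locallyIntegrableOn hΩ.measurableSet)
    fun ψ hψ ↦ ?_)
  have hgrad : ∫ x, inner ℝ (gradient w x) (gradient ψ x) =
      inner ℝ (grad v) (grad hψ.toL2Pair) := by
    rw [L2.inner_def]
    refine integral_congr_ae ?_
    filter_upwards [hψ.coeFn_grad,
      H10.grad_ae_eq_gradient hΩ hv.1 (hw.of_le one_le_two) hvw] with x hψx hvx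
    by_cases hx : x ∈ Ω
    · rw [hψx, hvx hx]
    · rw [hψx, hψ.gradient_apply_eq_zero hx, inner_zero_right, inner_zero_right]
  calc ∫ x, -lapl w x * ψ x = inner ℝ H (val hψ.toL2Pair) := by
        rw [← hψ.integral_inner_gradient_eq hΩ hw, hgrad, hv.2 _ hψ.toL2Pair_mem_H10]
    _ = ∫ x, h x * ψ x := by
        rw [L2.inner_def]
        refine integral_congr_ae ?_
        filter_upwards [hψ.coeFn_val, hHh] with x hψx hHx
        by_cases hx : x ∈ Ω
        · rw [hψx, hHx hx, RCLike.inner_apply, conj_trivial, mul_comm]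
        · rw [hψx, hψ.apply_eq_zero hx, inner_zero_right, mul_zero]

theorem preciseRep_val_eventuallyEq (hv : IsWeakSolution Ω v H) (hB : ∀ᵐ z, |H z| ≤ B)
    (hr : 0 < r) (hx : closedBall x (2 * r) ⊆ Ω) :
    preciseRep (val v) =ᶠ[𝓝 x]
      fun y ↦ kernelAverage mollifier (val v) r y + localPotential potentialKernel H r y := by
  filter_upwards [ball_mem_nhds x hr] with y hy
  exact hv.preciseRep_val_eq hB hr
    ((closedBall_subset_closedBall' (by linarith [mem_ball.1 hy])).trans hx)

theorem contDiffOn_one_preciseRep (hv : IsWeakSolution Ω v H) (hΩ : IsOpen Ω)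
    (hB : ∀ᵐ z, |H z| ≤ B) : ContDiffOn ℝ 1 (preciseRep (val v)) Ω := by
  intro x hx
  obtain ⟨R, hR, hRΩ⟩ := nhds_basis_closedBall.mem_iff.1 (hΩ.mem_nhds hx)
  have hr : 0 < R / 2 := half_pos hR
  have hsmooth := ((isUnitKernel_mollifier.contDiff_kernelAverage
    ((Lp.memLp (val v)).locallyIntegrable one_le_two) hr).of_le (mod_cast le_top)).add
      (isUnitKernel_potentialKernel.contDiff_one_localPotential
        ((Lp.memLp H).locallyIntegrable one_le_two) hB hr.le)
  have hlocal := hv.preciseRep_val_eventuallyEq hB hr (by rwa [mul_div_cancel₀ R two_ne_zero])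
  exact (hsmooth.contDiffAt.congr_of_eventuallyEq hlocal).contDiffWithinAt

theorem contDiffOn_two_preciseRep (hv : IsWeakSolution Ω v H) (hΩ : IsOpen Ω)
    (hB : ∀ᵐ z, |H z| ≤ B) (hh : ContDiffOn ℝ 1 h Ω) (hHh : ∀ᵐ x, x ∈ Ω → H x = h x) :
    ContDiffOn ℝ 2 (preciseRep (val v)) Ω := by
  intro x hx
  obtain ⟨R, hR, hRΩ⟩ := nhds_basis_closedBall.mem_iff.1 (hΩ.mem_nhds hx)
  obtain ⟨r, rfl⟩ : ∃ r, R = 3 * r := ⟨R / 3, (mul_div_cancel₀ R three_ne_zero).symm⟩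
  have hr : 0 < r := by linarith
  have h2r : closedBall x (2 * r) ⊆ Ω := (closedBall_subset_closedBall (by linarith)).trans hRΩ
  let η : ContDiffBump x := ⟨2 * r, 3 * r, by positivity, by linarith⟩
  have hsupp : tsupport (fun z ↦ η z * h z) ⊆ closedBall x (3 * r) :=
    tsupport_mul_subset_left.trans η.tsupport_eq.subset
  have hcutoff : ContDiff ℝ 1 fun z ↦ η z * h z := contDiff_iff_contDiffAt.2 fun z ↦ by
    by_cases hz : z ∈ tsupport fun z ↦ η z * h z
    · exact η.contDiff.contDiffAt.mul (hh.contDiffAt (hΩ.mem_nhds (hRΩ (hsupp hz))))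
    · exact contDiffAt_const.congr_of_eventuallyEq (notMem_tsupport_iff_eventuallyEq.1 hz)
  have haverage := contDiff_infty.1 (isUnitKernel_mollifier.contDiff_kernelAverage
    ((Lp.memLp (val v)).locallyIntegrable one_le_two) hr) 2
  have hsmooth : ContDiff ℝ 2 fun y ↦ kernelAverage mollifier (val v) r y +
      localPotential potentialKernel (fun z ↦ η z * h z) r y :=
    haverage.add (isUnitKernel_potentialKernel.contDiff_two_localPotential hcutoff
        (.of_isClosed_subset (isCompact_closedBall x _) (isClosed_tsupport _) hsupp) hr.le)
  refine (hsmooth.contDiffAt.congr_of_eventuallyEq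
    ((hv.preciseRep_val_eventuallyEq hB hr h2r).trans ?_)).contDiffWithinAt
  filter_upwards [ball_mem_nhds x hr] with y hy
  congr 1
  refine isUnitKernel_potentialKernel.localPotential_congr_ae hr.le ?_
  filter_upwards [hHh] with z hz hzy
  have hzx : z ∈ closedBall x (2 * r) :=
    closedBall_subset_closedBall' (by linarith [mem_ball.1 hy]) hzy
  rw [hz (h2r hzx), η.one_of_mem_closedBall hzx, one_mul]

theorem preciseRep_nonneg (hv : IsWeakSolution Ω v H) (hΩ : IsOpen Ω) (hB : ∀ᵐ z, |H z| ≤ B)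
    (hval : ∀ᵐ z, 0 ≤ val v z) (hH : ∀ᵐ z, 0 ≤ H z) (hx : x ∈ Ω) :
    0 ≤ preciseRep (val v) x := by
  obtain ⟨r, hr, hrΩ⟩ := nhds_basis_closedBall.mem_iff.1 (hΩ.mem_nhds hx)
  rw [hv.preciseRep_val_eq hB hr hrΩ]
  exact add_nonneg (kernelAverage_nonneg mollifier_nonneg hval hr x)
    (localPotential_nonneg potentialKernel_nonneg hH hr.le x)

theorem preciseRep_eventuallyEq_zero (hv : IsWeakSolution Ω v H) (hΩ : IsOpen Ω)
    (hB : ∀ᵐ z, |H z| ≤ B) (hval : ∀ᵐ z, 0 ≤ val v z) (hH : ∀ᵐ z, 0 ≤ H z) (hx : x ∈ Ω)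
    (hzero : preciseRep (val v) x = 0) : preciseRep (val v) =ᶠ[𝓝 x] 0 := by
  obtain ⟨r, hr, hrΩ⟩ := nhds_basis_closedBall.mem_iff.1 (hΩ.mem_nhds hx)
  have hloc := (Lp.memLp (val v)).locallyIntegrable (μ := volume) one_le_two
  have haverage : kernelAverage mollifier (val v) r x = 0 := by
    have := kernelAverage_nonneg mollifier_nonneg hval hr x
    have := localPotential_nonneg potentialKernel_nonneg hH hr.le x
    linarith [hv.preciseRep_val_eq hB hr hrΩ]
  rw [kernelAverage_apply, integral_eq_zero_iff_of_nonneg_ae ?_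
    (isUnitKernel_mollifier.integrable_smul_dilate hloc hr x)] at haverage
  swap
  · filter_upwards [hval] with z hz
    exact mul_nonneg hz (mul_nonneg (by positivity) (mollifier_nonneg _))
  have hball : EqOn (preciseRep (val v)) 0 (ball x r) := by
    refine Measure.eqOn_open_of_ae_eq (μ := volume) ?_ isOpen_ball
      ((hv.contDiffOn_one_preciseRep hΩ hB).continuousOn.mono (ball_subset_closedBall.trans hrΩ))
      continuousOn_const
    refine (ae_restrict_iff' measurableSet_ball).2 ?_
    filter_upwards [haverage, preciseRep_ae_eq hloc] with z hz hrep hzx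
    have hpos : 0 < dilate mollifier r (x - z) := by
      refine mul_pos (by positivity) (mollifier_pos ?_)
      rwa [norm_smul, norm_inv, norm_of_nonneg hr.le, inv_mul_eq_div, div_lt_one hr,
        ← dist_eq_norm, ← mem_ball']
    exact hrep.trans ((smul_eq_zero.1 hz).resolve_right hpos.ne')
  exact hball.eventuallyEq_of_mem (ball_mem_nhds x hr)

theorem preciseRep_pos_or_eq_zero (hv : IsWeakSolution Ω v H) (hΩ : IsOpen Ω)
    (hΩc : IsPreconnected Ω) (hB : ∀ᵐ z, |H z| ≤ B) (hval : ∀ᵐ z, 0 ≤ val v z)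
    (hH : ∀ᵐ z, 0 ≤ H z) :
    (∀ x ∈ Ω, 0 < preciseRep (val v) x) ∨ ∀ x ∈ Ω, preciseRep (val v) x = 0 := by
  have hpos : IsOpen (Ω ∩ preciseRep (val v) ⁻¹' Ioi 0) :=
    (hv.contDiffOn_one_preciseRep hΩ hB).continuousOn.isOpen_inter_preimage hΩ isOpen_Ioi
  have hzero : IsOpen (Ω ∩ preciseRep (val v) ⁻¹' {0}) := isOpen_iff_mem_nhds.2 fun x hx ↦ by
    filter_upwards [hΩ.mem_nhds hx.1, hv.preciseRep_eventuallyEq_zero hΩ hB hval hH hx.1 hx.2]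
      with y hy hy0 using ⟨hy, hy0⟩
  have hcover : Ω ⊆ Ω ∩ preciseRep (val v) ⁻¹' Ioi 0 ∪ Ω ∩ preciseRep (val v) ⁻¹' {0} :=
    fun x hx ↦ (hv.preciseRep_nonneg hΩ hB hval hH hx).lt_or_eq'.imp (⟨hx, ·⟩) (⟨hx, ·⟩)
  have hdisjoint : Disjoint (Ω ∩ preciseRep (val v) ⁻¹' Ioi 0)
      (Ω ∩ preciseRep (val v) ⁻¹' {0}) :=
    disjoint_left.2 fun x hx hx0 ↦ hx.2.ne' hx0.2
  exact (hΩc.subset_or_subset hpos hzero hdisjoint hcover).imp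
    (fun hsub x hx ↦ (hsub hx).2) (fun hsub x hx ↦ (hsub hx).2)

end IsWeakSolution

end Regularity

section NonlocalProblem

open Filter Topology L2Pair
open scoped ContDiff

section Frontier

theorem nonempty_frontier_of_isBounded {E : Type*} [NormedAddCommGroup E] [NormedSpace ℝ E]
    [Nontrivial E] {s : Set E} (hs : s.Nonempty) (hb : Bornology.IsBounded s) :
    (frontier s).Nonempty :=
  nonempty_frontier_iff.2 ⟨hs, fun h ↦ NormedSpace.unbounded_univ ℝ E (h ▸ hb)⟩

variable {X : Type*} [TopologicalSpace X] {Ω : Set X} {u : X → ℝ}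

theorem mem_or_mem_frontier {x : X} (hx : x ∈ closure Ω) : x ∈ Ω ∨ x ∈ frontier Ω :=
  or_iff_not_imp_left.2 fun hxΩ ↦ ⟨hx, fun h ↦ hxΩ (interior_subset h)⟩

theorem continuousOn_indicator_of_le (hΩ : IsOpen Ω) {b : X → ℝ} (hu : ContinuousOn u Ω)
    (hu0 : ∀ x ∈ Ω, 0 ≤ u x) (hub : ∀ x ∈ Ω, u x ≤ b x) (hb : ContinuousOn b (closure Ω))
    (hb0 : ∀ x ∈ frontier Ω, b x = 0) : ContinuousOn (Ω.indicator u) (closure Ω) := by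
  intro x hx
  by_cases hxΩ : x ∈ Ω
  · exact ((hu.congr fun y hy ↦ indicator_of_mem hy u).continuousAt
      (hΩ.mem_nhds hxΩ)).continuousWithinAt
  have hbx := hb x hx
  rw [ContinuousWithinAt, hb0 x ((mem_or_mem_frontier hx).resolve_left hxΩ)] at hbx
  rw [ContinuousWithinAt, indicator_of_notMem hxΩ]
  refine squeeze_zero' (.of_forall fun y ↦ indicator_nonneg hu0 y) ?_ hbx
  filter_upwards [self_mem_nhdsWithin] with y hy
  by_cases hyΩ : y ∈ Ω
  · exact (indicator_of_mem hyΩ u).trans_le (hub y hyΩ)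
  · rw [indicator_of_notMem hyΩ, hb0 y ((mem_or_mem_frontier hy).resolve_left hyΩ)]

theorem eq_zero_of_comp_eq_zero (hΩ : IsPreconnected Ω) (hfr : (frontier Ω).Nonempty)
    (hu : ContinuousOn u (closure Ω)) (hu0 : ∀ x ∈ frontier Ω, u x = 0)
    (hnonneg : ∀ x ∈ Ω, 0 ≤ u x) {g : ℝ → ℝ} (hg : ∀ᶠ s in 𝓝[>] 0, 0 < g s)
    (hgu : ∀ x ∈ Ω, g (u x) = 0) : ∀ x ∈ Ω, u x = 0 := by
  intro x hx
  by_contra hne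
  have hpos : 0 < u x := (hnonneg x hx).lt_of_ne' hne
  obtain ⟨s, hgs, hs⟩ := (hg.and (Ioo_mem_nhdsGT hpos)).exists
  obtain ⟨y, hy⟩ := hfr
  obtain ⟨z, hz, rfl⟩ := hΩ.closure.intermediate_value (frontier_subset_closure hy)
    (subset_closure hx) hu ⟨(hu0 y hy).trans_le hs.1.le, hs.2.le⟩
  rcases mem_or_mem_frontier hz with hzΩ | hzfr
  · exact hgs.ne' (hgu z hzΩ)
  · exact hs.1.ne' (hu0 z hzfr)

theorem forall_le_of_ae_le [MeasurableSpace X] [OpensMeasurableSpace X] {μ : Measure X}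
    [μ.IsOpenPosMeasure] (hΩ : IsOpen Ω) {a b : X → ℝ} (ha : ContinuousOn a Ω)
    (hb : ContinuousOn b Ω) (hab : ∀ᵐ x ∂μ, x ∈ Ω → a x ≤ b x) : ∀ x ∈ Ω, a x ≤ b x := by
  have hsup : EqOn (fun x ↦ max (a x) (b x)) b Ω := by
    refine Measure.eqOn_open_of_ae_eq (μ := μ) ?_ hΩ (ha.sup hb) hb
    refine (ae_restrict_iff' hΩ.measurableSet).2 ?_
    filter_upwards [hab] with x hx hxΩ using max_eq_right (hx hxΩ)
  exact fun x hx ↦ max_eq_right_iff.1 (hsup hx)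

end Frontier

theorem IsWeakSolution.const_smul {E : Type*} [NormedAddCommGroup E] [InnerProductSpace ℝ E]
    [FiniteDimensional ℝ E] [MeasurableSpace E] [BorelSpace E] {Ω : Set E} {v : L2Pair E}
    {H : Lp ℝ 2 (volume : Measure E)} (hv : IsWeakSolution Ω v H) (c : ℝ) :
    IsWeakSolution Ω (c • v) (c • H) :=
  ⟨(H10 Ω).smul_mem c hv.1, fun w hw ↦ by
    rw [map_smul, real_inner_smul_left, real_inner_smul_left, hv.2 w hw]⟩

theorem IsWeakSolution.sub {E : Type*} [NormedAddCommGroup E] [InnerProductSpace ℝ E]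
    [FiniteDimensional ℝ E] [MeasurableSpace E] [BorelSpace E] {Ω : Set E} {v v' : L2Pair E}
    {H H' : Lp ℝ 2 (volume : Measure E)} (hv : IsWeakSolution Ω v H)
    (hv' : IsWeakSolution Ω v' H') : IsWeakSolution Ω (v - v') (H - H') :=
  ⟨(H10 Ω).sub_mem hv.1 hv'.1, fun w hw ↦ by
    rw [map_sub, inner_sub_left, inner_sub_left, hv.2 w hw, hv'.2 w hw]⟩

variable {N : ℕ} {Ω : Set (EuclideanSpace ℝ (Fin N))} {u v Φ : L2Pair (EuclideanSpace ℝ (Fin N))}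
  {H F : Lp ℝ 2 (volume : Measure (EuclideanSpace ℝ (Fin N)))} {C m : ℝ} {g : ℝ → ℝ}
  {w f φ ξ : EuclideanSpace ℝ (Fin N) → ℝ}

theorem lapl_eq_zero (hΩ : IsOpen Ω) (hw : ∀ x ∈ Ω, w x = 0) : ∀ x ∈ Ω, lapl w x = 0 := by
  intro x hx
  have hzero : w =ᶠ[𝓝 x] 0 := EqOn.eventuallyEq_of_mem hw (hΩ.mem_nhds hx)
  refine Finset.sum_eq_zero fun i _ ↦ ?_
  have hpartial : (fun y ↦ fderiv ℝ w y (EuclideanSpace.single i 1)) =ᶠ[𝓝 x] 0 := by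
    filter_upwards [hzero.fderiv (𝕜 := ℝ)] with y hy
    simp [hy]
  simp [hpartial.fderiv_eq]

theorem IsTorsionFn.isNonnegDirichlet (hξ : IsTorsionFn Ω ξ) : IsNonnegDirichlet Ω ξ :=
  ⟨hξ.1, hξ.2.1.of_le one_le_two, hξ.2.2.1, hξ.2.2.2.2⟩

theorem IsWeakSolution.preciseRep_le_mul_torsion [NeZero N] (hv : IsWeakSolution Ω v H)
    (hΩ : IsOpen Ω) (hb : Bornology.IsBounded Ω) (hC : ∀ᵐ x, |H x| ≤ C)
    (hξ : IsTorsionFn Ω ξ) : ∀ x ∈ Ω, preciseRep (val v) x ≤ C * ξ x := by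
  obtain ⟨Ξ, I, hΞ, hΞξ, hI⟩ := exists_isWeakSolution_of_classical hξ.isNonnegDirichlet hξ.2.1 hΩ
    hb (h := fun _ ↦ 1) continuousOn_const hξ.2.2.2.1
  have hdiff : 0 ≤ val (C • Ξ - v) := by
    refine ((hΞ.const_smul C).sub hv).val_nonneg hΩ.measurableSet hb ?_
    filter_upwards [hC, hI, Lp.coeFn_sub (C • I) H, Lp.coeFn_smul C I] with x hCx hIx hsub hsmul hx
    rw [hsub, Pi.sub_apply, hsmul, Pi.smul_apply, hIx, indicator_of_mem hx, smul_eq_mul, mul_one]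
    exact sub_nonneg.2 ((le_abs_self _).trans hCx)
  rw [map_sub, sub_nonneg, map_smul, ← Lp.coeFn_le] at hdiff
  refine forall_le_of_ae_le (μ := volume) hΩ (hv.contDiffOn_one_preciseRep hΩ hC).continuousOn
    (continuousOn_const.mul (hξ.1.mono subset_closure)) ?_
  filter_upwards [hdiff, hΞξ, Lp.coeFn_smul C (val Ξ),
    preciseRep_ae_eq ((Lp.memLp (val v)).locallyIntegrable one_le_two)] with x hle hΞx hsmul hrep hx
  rwa [hsmul, Pi.smul_apply, hΞx, indicator_of_mem hx, smul_eq_mul, ← hrep] at hle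

/-- `w` is a classical correction of `φ`: a nonnegative solution of `-Δw = g((φ + w)/m)` in `Ω`,
vanishing either nowhere or identically, and lying below the barrier `b`. Adding `w` to the given
solution of `-Δφ = f` solves `-mΔu = g(u) + f` with `u = (φ + w)/m`. -/
structure IsCorrection (Ω : Set (EuclideanSpace ℝ (Fin N))) (m : ℝ) (g : ℝ → ℝ)
    (φ b w : EuclideanSpace ℝ (Fin N) → ℝ) : Prop where
  contDiffOn : ContDiffOn ℝ 2 w Ω
  nonneg : ∀ x ∈ Ω, 0 ≤ w x
  le : ∀ x ∈ Ω, w x ≤ b x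
  neg_lapl_eq : ∀ x ∈ Ω, -lapl w x = g ((φ x + w x) / m)
  pos_or_eq_zero : (∀ x ∈ Ω, 0 < w x) ∨ ∀ x ∈ Ω, w x = 0

theorem IsWeakSolution.contDiffOn_two_preciseRep_of_semilinear (hv : IsWeakSolution Ω v H)
    (hΩ : IsOpen Ω) (hC : ∀ᵐ x, |H x| ≤ C) (hg : ContDiff ℝ 1 g) (hφ : ContDiffOn ℝ 1 φ Ω)
    (hH : ∀ᵐ x, x ∈ Ω → H x = g ((φ x + preciseRep (val v) x) / m)) :
    ContDiffOn ℝ 2 (preciseRep (val v)) Ω :=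
  hv.contDiffOn_two_preciseRep hΩ hC
    (hg.comp_contDiffOn ((hφ.add (hv.contDiffOn_one_preciseRep hΩ hC)).div_const m)) hH

theorem IsWeakSolution.isCorrection_preciseRep [NeZero N] (hv : IsWeakSolution Ω v H)
    (hΩ : IsOpen Ω) (hΩc : IsPreconnected Ω) (hb : Bornology.IsBounded Ω) (hg : ContDiff ℝ 1 g)
    (hg0 : ∀ s, 0 ≤ g s) (hgC : ∀ s, g s ≤ C) (hφ : ContDiffOn ℝ 1 φ Ω) (hξ : IsTorsionFn Ω ξ)
    (hrange : ∀ᵐ x, H x ∈ range g)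
    (hH : ∀ᵐ x, x ∈ Ω → H x = g ((φ x + preciseRep (val v) x) / m)) :
    IsCorrection Ω m g φ (fun x ↦ C * ξ x) (preciseRep (val v)) := by
  have hH0 : ∀ᵐ x, 0 ≤ H x := by
    filter_upwards [hrange] with x ⟨s, hs⟩ using hs ▸ hg0 s
  have hHC : ∀ᵐ x, |H x| ≤ C := by
    filter_upwards [hrange] with x ⟨s, hs⟩ using hs ▸ (abs_of_nonneg (hg0 s)).trans_le (hgC s)
  have hval : ∀ᵐ x, 0 ≤ val v x :=
    (Lp.coeFn_nonneg _).2 (hv.val_nonneg hΩ.measurableSet hb (hH0.mono fun _ hx _ ↦ hx))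
  have hsmooth := hv.contDiffOn_two_preciseRep_of_semilinear hΩ hHC hg hφ hH
  refine ⟨hsmooth, fun x hx ↦ hv.preciseRep_nonneg hΩ hHC hval hH0 hx,
    hv.preciseRep_le_mul_torsion hΩ hb hHC hξ, ?_,
    hv.preciseRep_pos_or_eq_zero hΩ hΩc hHC hval hH0⟩
  refine hv.neg_lapl_eq hΩ hsmooth ?_ (hg.continuous.comp_continuousOn
    ((hφ.continuousOn.add hsmooth.continuousOn).div_const m)) hH
  filter_upwards [preciseRep_ae_eq ((Lp.memLp (val v)).locallyIntegrable one_le_two)] with x hx _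
    using hx.symm

theorem IsWeakSolution.exists_isCorrection [NeZero N] (hu : IsWeakSolution Ω (m • u) (H + F))
    (hm : m ≠ 0) (hΩ : IsOpen Ω) (hΩc : IsPreconnected Ω) (hb : Bornology.IsBounded Ω)
    (hg : ContDiff ℝ 1 g) (hg0 : ∀ s, 0 ≤ g s) (hgC : ∀ s, g s ≤ C)
    (hH : H =ᵐ[volume] g ∘ val u) (hφ : ContDiffOn ℝ 1 φ Ω) (hΦ : IsWeakSolution Ω Φ F)
    (hΦφ : val Φ =ᵐ[volume] Ω.indicator φ) (hξ : IsTorsionFn Ω ξ) :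
    ∃ w, IsCorrection Ω m g φ (fun x ↦ C * ξ x) w ∧
      ∀ᵐ x, x ∈ Ω → val u x = (φ x + w x) / m := by
  have hv : IsWeakSolution Ω (m • u - Φ) H := by simpa using hu.sub hΦ
  have hval : ∀ᵐ x, x ∈ Ω → val u x = (φ x + preciseRep (val (m • u - Φ)) x) / m := by
    have hdecomp : val (m • u - Φ) = m • val u - val Φ := by rw [map_sub, map_smul]
    filter_upwards [preciseRep_ae_eq ((Lp.memLp (val (m • u - Φ))).locallyIntegrable one_le_two),
      hΦφ, hdecomp ▸ Lp.coeFn_sub (m • val u) (val Φ), Lp.coeFn_smul m (val u)]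
      with x hrep hΦx hsub hsmul hx
    rw [hrep, hsub, Pi.sub_apply, hsmul, hΦx, indicator_of_mem hx, add_sub_cancel, Pi.smul_apply,
      smul_eq_mul, mul_div_cancel_left₀ _ hm]
  refine ⟨_, hv.isCorrection_preciseRep hΩ hΩc hb hg hg0 hgC hφ hξ
    (hH.mono fun x hx ↦ ⟨_, hx.symm⟩) ?_, hval⟩
  filter_upwards [hH, hval] with x hHx hx hxΩ
  rw [hHx, Function.comp_apply, hx hxΩ]

namespace IsCorrection

variable {b : EuclideanSpace ℝ (Fin N) → ℝ}

theorem pos [NeZero N] (hw : IsCorrection Ω m g φ b w) (hm : 0 < m) (hΩ : IsOpen Ω)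
    (hΩc : IsConnected Ω) (hb : Bornology.IsBounded Ω) (hg : ∀ᶠ s in 𝓝[>] 0, 0 < g s)
    (hφ : IsNonnegDirichlet Ω φ) (hφne : ∃ x ∈ Ω, lapl φ x ≠ 0) : ∀ x ∈ Ω, 0 < w x := by
  refine hw.pos_or_eq_zero.resolve_right fun hzero ↦ ?_
  have hφzero : ∀ x ∈ Ω, φ x / m = 0 := by
    refine eq_zero_of_comp_eq_zero hΩc.isPreconnected
      (nonempty_frontier_of_isBounded hΩc.nonempty hb) (hφ.continuousOn.div_const m)
      (fun x hx ↦ by rw [hφ.eq_zero_of_mem_frontier x hx, zero_div])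
      (fun x hx ↦ div_nonneg (hφ.nonneg x hx) hm.le) hg fun x hx ↦ ?_
    calc g (φ x / m) = -lapl w x := by rw [hw.neg_lapl_eq x hx, hzero x hx, add_zero]
      _ = 0 := by rw [lapl_eq_zero hΩ hzero x hx, neg_zero]
  obtain ⟨x, hx, hne⟩ := hφne
  exact hne (lapl_eq_zero hΩ (fun y hy ↦ (div_eq_zero_iff.1 (hφzero y hy)).resolve_right hm.ne')
    x hx)

theorem continuousOn_indicator (hw : IsCorrection Ω m g φ b w) (hm : 0 < m) (hΩ : IsOpen Ω)
    (hφ : IsNonnegDirichlet Ω φ) (hb : ContinuousOn b (closure Ω))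
    (hb0 : ∀ x ∈ frontier Ω, b x = 0) :
    ContinuousOn (Ω.indicator fun x ↦ (φ x + w x) / m) (closure Ω) :=
  continuousOn_indicator_of_le hΩ
    ((hφ.contDiffOn.continuousOn.add hw.contDiffOn.continuousOn).div_const m)
    (fun x hx ↦ div_nonneg (add_nonneg (hφ.nonneg x hx) (hw.nonneg x hx)) hm.le)
    (fun x hx ↦ div_le_div_of_nonneg_right (add_le_add_right (hw.le x hx) (φ x)) hm.le)
    ((hφ.continuousOn.add hb).div_const m)
    fun x hx ↦ by rw [hφ.eq_zero_of_mem_frontier x hx, hb0 x hx, add_zero, zero_div]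

end IsCorrection

theorem IsWeakSolution.mul_neg_lapl_eq (hu : IsWeakSolution Ω (m • u) (H + F)) (hm : m ≠ 0)
    (hΩ : IsOpen Ω) (hg : Continuous g) (hw : ContDiffOn ℝ 2 w Ω)
    (huw : ∀ᵐ x, x ∈ Ω → val u x = w x) (hH : H =ᵐ[volume] g ∘ val u) (hf : ContinuousOn f Ω)
    (hFf : ∀ᵐ x, x ∈ Ω → F x = f x) : ∀ x ∈ Ω, -m * lapl w x = g (w x) + f x := by
  have hu' : IsWeakSolution Ω u (m⁻¹ • (H + F)) := by simpa [hm] using hu.const_smul m⁻¹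
  intro x hx
  rw [neg_mul, ← mul_neg, hu'.neg_lapl_eq hΩ hw huw
    (h := fun x ↦ m⁻¹ * (g (w x) + f x)) (continuousOn_const.mul
      ((hg.comp_continuousOn hw.continuousOn).add hf)) ?_ x hx, mul_inv_cancel_left₀ hm]
  filter_upwards [Lp.coeFn_smul m⁻¹ (H + F), Lp.coeFn_add H F, hH, hFf, huw]
    with y hsmul hadd hHy hFy huy hy
  rw [hsmul, Pi.smul_apply, hadd, Pi.add_apply, hHy, hFy hy, Function.comp_apply, huy hy,
    smul_eq_mul]

end NonlocalProblem

section SineSquared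

open Filter Topology

theorem lipschitzWith_sin_sq : LipschitzWith 1 fun s ↦ sin s ^ 2 :=
  lipschitzWith_of_nnnorm_deriv_le (by fun_prop) fun s ↦ by
    have hderiv : HasDerivAt (fun s ↦ sin s ^ 2) (sin (2 * s)) s := by
      simpa [sin_two_mul] using (hasDerivAt_sin s).fun_pow 2
    rw [hderiv.deriv]
    exact abs_sin_le_one (2 * s)

theorem eventually_sin_sq_pos : ∀ᶠ s in 𝓝[>] (0 : ℝ), 0 < sin s ^ 2 := by
  filter_upwards [Ioo_mem_nhdsGT pi_pos] with s hs using pow_pos (sin_pos_of_mem_Ioo hs) 2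

end SineSquared

open Filter Topology L2Pair in
theorem stmt_9_general {N : ℕ} [NeZero N] {Ω : Set (EuclideanSpace ℝ (Fin N))} (hΩ : IsOpen Ω)
    (hΩc : IsConnected Ω) (hb : Bornology.IsBounded Ω) {M : ℝ → ℝ} (hM : Continuous M) {m : ℝ}
    (hm : 0 < m) (hmM : ∀ t, m ≤ M t) {g : ℝ → ℝ} {K : ℝ≥0} {C : ℝ} (hg : ContDiff ℝ 1 g)
    (hgK : LipschitzWith K g) (hg0 : g 0 = 0) (hg_nonneg : ∀ s, 0 ≤ g s) (hgC : ∀ s, g s ≤ C)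
    (hg_pos : ∀ᶠ s in 𝓝[>] 0, 0 < g s) {f φ ξ : EuclideanSpace ℝ (Fin N) → ℝ}
    (hf : ContinuousOn f (closure Ω)) (hfne : ¬ ∀ x ∈ Ω, f x = 0)
    (hφ : ContinuousOn φ (closure Ω)) (hφ2 : ContDiffOn ℝ 2 φ Ω)
    (hφeq : ∀ x ∈ Ω, -lapl φ x = f x) (hφ_nonneg : ∀ x ∈ Ω, 0 ≤ φ x)
    (hφ0 : ∀ x ∈ frontier Ω, φ x = 0) (hξ : IsTorsionFn Ω ξ) :
    ∃ u : EuclideanSpace ℝ (Fin N) → ℝ, ContinuousOn u (closure Ω) ∧ ContDiffOn ℝ 2 u Ω ∧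
      (∀ x ∈ Ω, -M (gradNorm2 Ω u) * lapl u x = g (u x) + f x) ∧ (∀ x ∈ Ω, 0 < u x) ∧
      ∀ x ∈ frontier Ω, u x = 0 := by
  have hφD : IsNonnegDirichlet Ω φ := ⟨hφ, hφ2.of_le one_le_two, hφ_nonneg, hφ0⟩
  obtain ⟨Φ, F, hΦ, hΦφ, hFf⟩ := exists_isWeakSolution_of_classical hφD hφ2 hΩ hb hf hφeq
  obtain ⟨U, hU⟩ := exists_isWeakSolution_nonlocal hΩ.measurableSet hb hM hm hmM hgK hg0
    (fun s ↦ (abs_of_nonneg (hg_nonneg s)).trans_le (hgC s)) F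
  have hMU : 0 < M ‖grad U‖ := hm.trans_le (hmM _)
  have hH := hgK.coeFn_compLp hg0 (val U)
  obtain ⟨w, hw, hUw⟩ := hU.exists_isCorrection hMU.ne' hΩ hΩc.isPreconnected hb hg hg_nonneg hgC
    hH hφD.contDiffOn hΦ hΦφ hξ
  have hw_pos : ∀ x ∈ Ω, 0 < w x := hw.pos hMU hΩ hΩc hb hg_pos hφD (by
    by_contra! hlapl
    exact hfne fun x hx ↦ by rw [← hφeq x hx, hlapl x hx, neg_zero])
  let u : EuclideanSpace ℝ (Fin N) → ℝ := Ω.indicator fun x ↦ (φ x + w x) / M ‖grad U‖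
  have hu {x} (hx : x ∈ Ω) : u x = (φ x + w x) / M ‖grad U‖ := indicator_of_mem hx _
  have hu2 : ContDiffOn ℝ 2 u Ω := ((hφ2.add hw.contDiffOn).div_const _).congr fun x hx ↦ hu hx
  have hUu : ∀ᵐ x, x ∈ Ω → val U x = u x := hUw.mono fun x hx hxΩ ↦ (hx hxΩ).trans (hu hxΩ).symm
  have hUΩ : U ∈ H10 Ω := (Submodule.smul_mem_iff _ hMU.ne').1 hU.1
  refine ⟨u, ?_, hu2, ?_, fun x hx ↦ ?_, fun x hx ↦
    indicator_of_notMem (disjoint_left.1 (disjoint_frontier_iff_isOpen.2 hΩ) hx) _⟩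
  · exact hw.continuousOn_indicator hMU hΩ hφD (continuousOn_const.mul hξ.1) fun x hx ↦ by
      rw [hξ.2.2.2.2 x hx, mul_zero]
  · rw [gradNorm2_eq_norm_grad hΩ hUΩ (hu2.of_le one_le_two) hUu]
    exact hU.mul_neg_lapl_eq hMU.ne' hΩ hg.continuous hu2 hUu hH (hf.mono subset_closure)
      (hFf.mono fun x hx hxΩ ↦ hx.trans (indicator_of_mem hxΩ f))
  · rw [hu hx]
    exact div_pos (add_pos_of_nonneg_of_pos (hφ_nonneg x hx) (hw_pos x hx)) hMU

/-- Theorem 2.3: the non-monotone problem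
`-(1 + d sin²(‖∇u‖₂)) Δu = sin²(u) + f`, `u > 0` in `Ω`, `u = 0` on `∂Ω`,
has a classical solution. -/
theorem stmt_9 {N : ℕ} (hN : 1 ≤ N) (Ω : Set (EuclideanSpace ℝ (Fin N)))
    (hΩo : IsOpen Ω) (hΩconn : IsConnected Ω) (hΩbd : Bornology.IsBounded Ω)
    (d : ℝ) (hd : 0 < d)
    (f : EuclideanSpace ℝ (Fin N) → ℝ)
    (hf1 : ContDiffOn ℝ 1 f Ω) (hfc : ContinuousOn f (closure Ω))
    (hfne : ¬ (∀ x ∈ Ω, f x = 0))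
    -- the problem -Δφ = f, φ ≥ 0 in Ω, φ = 0 on ∂Ω has a classical solution
    (φ : EuclideanSpace ℝ (Fin N) → ℝ)
    (hφc : ContinuousOn φ (closure Ω)) (hφ2 : ContDiffOn ℝ 2 φ Ω)
    (hφeq : ∀ x ∈ Ω, -lapl φ x = f x) (hφnn : ∀ x ∈ Ω, 0 ≤ φ x)
    (hφbd : ∀ x ∈ frontier Ω, φ x = 0)
    -- Ω admits a torsion function
    (ξ : EuclideanSpace ℝ (Fin N) → ℝ) (hξ : IsTorsionFn Ω ξ) :
    ∃ u : EuclideanSpace ℝ (Fin N) → ℝ,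
      ContinuousOn u (closure Ω) ∧ ContDiffOn ℝ 2 u Ω ∧
      (∀ x ∈ Ω, (-(1 + d * Real.sin (gradNorm2 Ω u) ^ 2)) * lapl u x
        = Real.sin (u x) ^ 2 + f x) ∧
      (∀ x ∈ Ω, 0 < u x) ∧
      (∀ x ∈ frontier Ω, u x = 0) := by
  have : NeZero N := ⟨by omega⟩
  exact stmt_9_general hΩo hΩconn hΩbd (M := fun t ↦ 1 + d * sin t ^ 2) (by fun_prop) one_pos
    (fun t ↦ le_add_of_nonneg_right (by positivity)) (contDiff_sin.pow 2) lipschitzWith_sin_sq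
    (by simp) (fun s ↦ sq_nonneg (sin s)) sin_sq_le_one eventually_sin_sq_pos hfc hfne hφc hφ2
    hφeq hφnn hφbd hξ
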